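/- (Semistandard domino insertion; color-to-spin bijection.) Let n = 2 and fix a 2-core δ. For all m, M, N ≥ 1 there is a bijection between the set of multisets of m triples (c, i, j) with c ∈ {0,1}, i ∈ {1,…,M}, j ∈ {1,…,N}, and the set of pairs (P, Q) of semistandard 2-ribbon (domino) tableaux of the same shape λ, where λ ranges over partitions with 2-core δ and |λ| = 2m + |δ|, P has entries in {1,…,N} and Q has entries in {1,…,M}, such that: (1) if the multiset is {(c_1,i_1,j_1),…,(c_m,i_m,j_m)} then 2(c_1 + ⋯ + c_m) = s(P) + s(Q); (2) the weight of P is the multiplicity vector of (j_1,…,j_m); (3) the weight of Q is the multiplicity vector of (i_1,…,i_m). -/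

import Mathlib

/-!
The bijection is a growth diagram.  Its local rule is an equivalence, for any two partitions `α`
and `β`, between the partitions `λ` such that `λ/α` and `λ/β` are horizontal domino strips, and the
triples `(μ, a, b)` where `α/μ` and `β/μ` are horizontal domino strips and `a, b` are natural
numbers.  It satisfies `|λ/α| = |β/μ| + a + b` and `|λ/β| = |α/μ| + a + b` (counting dominoes), and
the total spin of the two upper strips exceeds that of the two lower strips by `2b`.  Here `a` and
`b` are the multiplicities of the letters of color `0` and `1` in a cell of the diagram
(`local_rule`).  Applying it to all cells of an `M × N` grid (`row_rule`, `grid_rule`) turns pairs of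
tableaux of a common outer shape `λ` into pairs of tableaux of common inner shape together with
an `M × N` matrix of pairs `(a, b)`.  When the outer shapes of the latter pair equal a `2`-core,
it is trivial (`Tab.eq_trivial`), because a nonempty strip always has a removable domino
(`HStrip.exists_remove`).  The matrix is the same as a multiset of colored biletters.

The local rule follows from an identity of generating functions,
`∑_μ x^|β/μ| q^spins = (1 - x) (1 - q² x) ∑_λ x^|λ/α| q^spins`, by inverting the two factors and
comparing coefficients.  Here `∑_μ` and `∑_λ` run over the common lower and upper ends.  To prove
it, partitions are encoded by boundary words of row steps and column steps.  Adding a horizontal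
domino strip moves row steps by even distances, and a strip is recognized, along with its size and
spin, by an automaton with two bits of memory (`run_bw`).  Hence both sides are products of
`16 × 16` transfer matrices.  A single linear map, `intertwine`, intertwines the matrices of the
two sides for every pair of letters (`upSum_eq_intertwine`), and the boundary conditions produce the
factor `(1 - x) (1 - q² x)` up to terms divisible by a high power of `x` (`up_down_congr`), since
only finitely many columns are considered.
-/

open scoped Classical

noncomputable section

/-- A cell of a Young/skew diagram: (row, column). -/
abbrev Cell : Type := ℕ × ℕ

/-- Two cells are adjacent if they share an edge. -/
def Adj (a b : Cell) : Prop :=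
  (a.1 = b.1 ∧ (a.2 + 1 = b.2 ∨ b.2 + 1 = a.2)) ∨
  (a.2 = b.2 ∧ (a.1 + 1 = b.1 ∨ b.1 + 1 = a.1))

/-- Reachability inside a finite set of cells via edge-adjacency. -/
def Reach (S : Finset Cell) (a b : Cell) : Prop :=
  Relation.ReflTransGen (fun x y => y ∈ S ∧ Adj x y) a b

/-- A set of cells is connected if any two of its cells are joined by a path inside it. -/
def CellsConnected (S : Finset Cell) : Prop :=
  ∀ a ∈ S, ∀ b ∈ S, Reach S a b

/-- The connected component of the cell `c` inside `S`. -/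
def component (S : Finset Cell) (c : Cell) : Finset Cell :=
  S.filter (fun d => Reach S c d)

/-- The number of connected components of a set of cells. -/
def numComponents (S : Finset Cell) : ℕ :=
  (S.image (fun c => component S c)).card

/-- `S` contains no 2 × 2 square of cells. -/
def NoSquare (S : Finset Cell) : Prop :=
  ¬ ∃ i j : ℕ, (i, j) ∈ S ∧ (i + 1, j) ∈ S ∧ (i, j + 1) ∈ S ∧ (i + 1, j + 1) ∈ S

/-- `S` is (the set of cells of) a skew shape `λ/μ`. -/
def IsSkewCells (S : Finset Cell) : Prop :=
  ∃ lam mu : YoungDiagram, mu ≤ lam ∧ S = lam.cells \ mu.cells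

/-- An `n`-ribbon: a connected skew shape with `n` cells and no 2 × 2 square. -/
def IsRibbon (n : ℕ) (S : Finset Cell) : Prop :=
  S.card = n ∧ CellsConnected S ∧ NoSquare S ∧ IsSkewCells S

/-- The spin of a ribbon: the number of rows it occupies, minus 1. -/
def ribbonSpin (S : Finset Cell) : ℕ := (S.image Prod.fst).card - 1

/-- `T` is a tiling of the cell set `S` by `n`-ribbons. -/
def IsTilingOf (n : ℕ) (S : Finset Cell) (T : Finset (Finset Cell)) : Prop :=
  (∀ R ∈ T, IsRibbon n R) ∧
  ((T : Set (Finset Cell)).Pairwise fun A B => Disjoint A B) ∧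
  T.biUnion id = S

/-- `S` can be tiled by `n`-ribbons. -/
def Tileable (n : ℕ) (S : Finset Cell) : Prop := ∃ T, IsTilingOf n S T

/-- Total spin of a tiling. -/
def tilingSpin (T : Finset (Finset Cell)) : ℕ := ∑ R ∈ T, ribbonSpin R

/-- The maximum spin of an `n`-ribbon tiling of `S`. -/
def maxSpin (n : ℕ) (S : Finset Cell) : ℕ :=
  sSup {m : ℕ | ∃ T, IsTilingOf n S T ∧ tilingSpin T = m}

/-- `c` is the topright-most cell of `R`: maximal column and, among those, minimal row. -/
def TopRightCell (R : Finset Cell) (c : Cell) : Prop :=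
  c ∈ R ∧ ∀ d ∈ R, d.2 ≤ c.2 ∧ (d.2 = c.2 → c.1 ≤ d.1)

/-- Every ribbon of the tiling `T` has its topright-most cell touching the northern
edge of the shape `S`: the cell directly above it is not in `S`. -/
def NorthernCond (S : Finset Cell) (T : Finset (Finset Cell)) : Prop :=
  ∀ R ∈ T, ∀ c : Cell, TopRightCell R c → (c.1 = 0 ∨ (c.1 - 1, c.2) ∉ S)

/-- `T` is a tiling of `S` witnessing that `S` is a horizontal `n`-ribbon strip. -/
def IsHStripTiling (n : ℕ) (S : Finset Cell) (T : Finset (Finset Cell)) : Prop :=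
  IsTilingOf n S T ∧ NorthernCond S T

/-- `S` is a horizontal `n`-ribbon strip. -/
def IsHStripCells (n : ℕ) (S : Finset Cell) : Prop :=
  IsSkewCells S ∧ ∃ T, IsHStripTiling n S T

/-- The spin of a horizontal `n`-ribbon strip (via its tiling, which is unique when it exists). -/
def stripSpin (n : ℕ) (S : Finset Cell) : ℕ :=
  if h : ∃ T, IsHStripTiling n S T then tilingSpin h.choose else 0

/-- Conjugate (transpose) of a set of cells. -/
def swapCells (S : Finset Cell) : Finset Cell := S.image Prod.swap

/-- `S` is a vertical `n`-ribbon strip: its conjugate is a horizontal one. -/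
def IsVStripCells (n : ℕ) (S : Finset Cell) : Prop :=
  IsHStripCells n (swapCells S)

/-- The spin of a vertical `n`-ribbon strip with `k = |S|/n` ribbons:
`k (n-1)` minus the spin of the conjugate strip. -/
def vStripSpin (n : ℕ) (S : Finset Cell) : ℕ :=
  (S.card / n) * (n - 1) - stripSpin n (swapCells S)

/-- `T` is a tiling of `S` witnessing that `S` is a vertical `n`-ribbon strip. -/
def IsVStripTiling (n : ℕ) (S : Finset Cell) (T : Finset (Finset Cell)) : Prop :=
  IsHStripTiling n (swapCells S) (T.image swapCells)

/-- `mu` is obtained from `lam` by removing a single `n`-ribbon. -/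
def RibbonStep (n : ℕ) (lam mu : YoungDiagram) : Prop :=
  mu ≤ lam ∧ IsRibbon n (lam.cells \ mu.cells)

/-- `delta` is the `n`-core of `lam`: it is obtained from `lam` by successively removing
`n`-ribbons, and no further `n`-ribbon can be removed from it. -/
def IsNCoreOf (n : ℕ) (delta lam : YoungDiagram) : Prop :=
  Relation.ReflTransGen (RibbonStep n) lam delta ∧ ∀ mu, ¬ RibbonStep n delta mu

/-- The `n`-core of a partition (defined via choice; it exists and is unique). -/
def nCore (n : ℕ) (lam : YoungDiagram) : YoungDiagram :=
  if h : ∃ d, IsNCoreOf n d lam then h.choose else lam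

/-- A semistandard `n`-ribbon tableau of shape `lam/mu` with entries in `{1, …, N}`:
a chain of partitions `mu = μ⁰ ⊆ μ¹ ⊆ ⋯ ⊆ μᴺ = lam` where each `μⁱ/μ^{i-1}` is a (possibly
empty) horizontal `n`-ribbon strip, together with the (unique) tiling of each strip. -/
structure RibbonTableau (n N : ℕ) (lam mu : YoungDiagram) where
  chain : Fin (N + 1) → YoungDiagram
  chain_zero : chain 0 = mu
  chain_last : chain (Fin.last N) = lam
  chain_mono : ∀ i : Fin N, chain i.castSucc ≤ chain i.succ
  tiling : Fin N → Finset (Finset Cell)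
  tiling_strip : ∀ i : Fin N,
    IsHStripTiling n ((chain i.succ).cells \ (chain i.castSucc).cells) (tiling i)

/-- The spin of a ribbon tableau. -/
def RibbonTableau.spin {n N : ℕ} {lam mu : YoungDiagram} (T : RibbonTableau n N lam mu) : ℕ :=
  ∑ i : Fin N, tilingSpin (T.tiling i)

/-- A standard ribbon tableau: each letter occurs exactly once. -/
def RibbonTableau.IsStandard {n N : ℕ} {lam mu : YoungDiagram}
    (T : RibbonTableau n N lam mu) : Prop :=
  ∀ i : Fin N, (T.tiling i).card = 1

/-- The monomial `q^{spin T} x^{weight T}` attached to a ribbon tableau. -/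
def tableauTerm {n N : ℕ} {lam mu : YoungDiagram} (T : RibbonTableau n N lam mu) :
    MvPolynomial (Fin N) (Polynomial ℤ) :=
  MvPolynomial.C (Polynomial.X ^ T.spin) *
    ∏ i : Fin N, MvPolynomial.X i ^ (T.tiling i).card

/-- The ribbon function `𝒢_{lam/mu}(x₁, …, x_N; q)`. -/
def ribbonFn (n N : ℕ) (lam mu : YoungDiagram) : MvPolynomial (Fin N) (Polynomial ℤ) :=
  ∑ᶠ T : RibbonTableau n N lam mu, tableauTerm T

/-- `𝒢_lam = 𝒢_{lam/(n-core of lam)}`. -/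
def G (n N : ℕ) (lam : YoungDiagram) : MvPolynomial (Fin N) (Polynomial ℤ) :=
  ribbonFn n N lam (nCore n lam)

/-- The Schur polynomial `s_ν(x₁,…,x_N)`, realized as the `n = 1` ribbon function
(1-ribbon tableaux are exactly semistandard Young tableaux, and all spins are 0). -/
def schurPoly (N : ℕ) (nu : YoungDiagram) : MvPolynomial (Fin N) (Polynomial ℤ) :=
  ribbonFn 1 N nu ⊥

/-- The cells of the `i`-th horizontal strip of a decomposition. -/
def stripCells {len : ℕ} (strip : Fin len → Finset (Finset Cell)) (i : Fin len) : Finset Cell :=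
  (strip i).biUnion id

/-- The cells of `lam` together with the strips up to (and including) `i`. -/
def partialCells {len : ℕ} (strip : Fin len → Finset (Finset Cell)) (lam : YoungDiagram)
    (i : Fin len) : Finset Cell :=
  lam.cells ∪ (Finset.univ.filter (fun j => j ≤ i)).biUnion (fun j => stripCells strip j)

/-- The union of the cells of the strips strictly before `i`. -/
def prevCells {len : ℕ} (strip : Fin len → Finset (Finset Cell)) (i : Fin len) : Finset Cell :=
  (Finset.univ.filter (fun j => j < i)).biUnion (fun j => stripCells strip j)

/-- Two cell sets touch if some cell of one is adjacent to some cell of the other. -/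
def Touches (A B : Finset Cell) : Prop :=
  ∃ a ∈ A, ∃ b ∈ B, Adj a b

/-- `R` is the rightmost ribbon within the cell set `C`. -/
def IsRightmostIn (R C : Finset Cell) : Prop :=
  ∃ c ∈ R, ∀ d ∈ C, d.2 ≤ c.2

/-- A border `n`-ribbon strip of shape `mu/lam`: the connected skew shape `mu/lam` with a
distinguished decomposition into disjoint non-empty horizontal `n`-ribbon strips
`T₁, …, T_len` (each recorded by its tiling) such that each partial union is a skew shape,
`T₁` is connected, and for `i ≥ 2` every connected component `C` of `Tᵢ` is such that
`C ∪ (T₁ ∪ ⋯ ∪ T_{i-1})` is not a horizontal `n`-ribbon strip and only the rightmost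
ribbon of `C` touches `T₁ ∪ ⋯ ∪ T_{i-1}`. -/
structure BorderRibbonStrip (n : ℕ) (lam mu : YoungDiagram) where
  len : ℕ
  len_pos : 1 ≤ len
  strip : Fin len → Finset (Finset Cell)
  sub : lam ≤ mu
  connected : CellsConnected (mu.cells \ lam.cells)
  nonempty : ∀ i, (strip i).Nonempty
  disj : ∀ i j, i ≠ j → Disjoint (stripCells strip i) (stripCells strip j)
  cover : Finset.univ.biUnion (fun i => stripCells strip i) = mu.cells \ lam.cells
  shape : ∀ i, ∃ nu : YoungDiagram, nu.cells = partialCells strip lam i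
  hstrips : ∀ i, IsHStripTiling n (stripCells strip i) (strip i)
  first_connected : CellsConnected (stripCells strip ⟨0, len_pos⟩)
  comp_cond : ∀ i : Fin len, 0 < (i : ℕ) → ∀ c ∈ stripCells strip i,
    (¬ IsHStripCells n (component (stripCells strip i) c ∪ prevCells strip i)) ∧
    (∀ R ∈ strip i, R ⊆ component (stripCells strip i) c →
      Touches R (prevCells strip i) → IsRightmostIn R (component (stripCells strip i) c))

/-- The height of a border ribbon strip: total number of connected components of its
horizontal strips, minus 1. -/
def BorderRibbonStrip.height {n : ℕ} {lam mu : YoungDiagram}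
    (S : BorderRibbonStrip n lam mu) : ℕ :=
  (∑ i : Fin S.len, numComponents (stripCells S.strip i)) - 1

/-- The spin of a border ribbon strip. -/
def BorderRibbonStrip.spin {n : ℕ} {lam mu : YoungDiagram}
    (S : BorderRibbonStrip n lam mu) : ℕ :=
  ∑ i : Fin S.len, tilingSpin (S.strip i)

/-- The size (number of ribbons) of a border ribbon strip. -/
def BorderRibbonStrip.size {n : ℕ} {lam mu : YoungDiagram}
    (S : BorderRibbonStrip n lam mu) : ℕ :=
  ∑ i : Fin S.len, (S.strip i).card

/-- `𝒳^{mu/lam}_k(q) = Σ_S (-1)^{h(S)} q^{s(S)}` over border `n`-ribbon strips of shape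
`mu/lam` with `k` ribbons. -/
def chiX (n k : ℕ) (lam mu : YoungDiagram) : Polynomial ℤ :=
  ∑ᶠ S : BorderRibbonStrip n lam mu,
    if S.size = k then (-1) ^ S.height * Polynomial.X ^ S.spin else 0

/-- The complete homogeneous symmetric polynomial of degree `k` evaluated at the family `v`. -/
def hPoly {ι R : Type*} [Fintype ι] [DecidableEq ι] [CommSemiring R] (k : ℕ) (v : ι → R) : R :=
  ∑ d : Sym ι k, ((d : Multiset ι).map v).prod

/-- The elementary symmetric polynomial of degree `k` evaluated at the family `v`. -/
def ePoly {ι R : Type*} [Fintype ι] [DecidableEq ι] [CommSemiring R] (k : ℕ) (v : ι → R) : R :=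
  ∑ s ∈ Finset.univ.powersetCard k, ∏ i ∈ s, v i

/-- The alphabet `A_q(x) = {q^{2j} x_i : 1 ≤ i ≤ N, 0 ≤ j ≤ n-1}`. -/
def alphabetVal (n N : ℕ) : Fin N × Fin n → MvPolynomial (Fin N) (Polynomial ℤ) :=
  fun p => MvPolynomial.C (Polynomial.X ^ (2 * (p.2 : ℕ))) * MvPolynomial.X p.1

/-- The Schur function `s_lam` evaluated at the alphabet `A_q(x)`,
i.e. the plethysm `s_lam[(1+q²+⋯+q^{2n-2})X]` in `N` variables. -/
def schurAlph (n N : ℕ) (lam : YoungDiagram) : MvPolynomial (Fin N) (Polynomial ℤ) :=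
  MvPolynomial.aeval
    (fun t : Fin (n * N) => alphabetVal n N (Prod.swap (finProdFinEquiv.symm t)))
    (schurPoly (n * N) lam)

end

/-- The spin of a (domino) ribbon tableau, repeated here for readability. -/
noncomputable abbrev tabSpin {n N : ℕ} {lam mu : YoungDiagram}
    (T : RibbonTableau n N lam mu) : ℕ := T.spin

/-! ### Transfer matrices and the intertwining map -/

/-- Adding a domino to a diagram moves one row step (`true`) of its boundary word two places to the
right.  Reading an inner and an outer word simultaneously, `u` and `v` record whether a moved row
step is due to land at the current and at the next place.  If a row step is present at the current
place (it has landed there, or the inner letter `a` is one) and the outer letter `y` is not one, it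
moves on; `nextCarry` records this. -/
def nextCarry (u a y : Bool) : Bool := (u || a) && !y

/-- The weight of one place: it vanishes if two row steps meet or if the outer word has a row step
out of nowhere; it contains a factor `x` for each new domino, and a factor `q` for each moved row
step (pending in `v`) that passes over a row step, which is the mark of a vertical domino. -/
def stepWt {A : Type*} [CommRing A] (x q : A) (u v a y : Bool) : A :=
  if (u && a) || (y && !(u || a)) then 0
  else (if nextCarry u a y then x else 1) * (if v && (u || a) then q else 1)

/-- For inner words `α` and `β`, the sum over all outer words of the weights of the two strips, with
`x` counting the dominoes added to `α`.  It starts with the given carries, and `τ` is the weight of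
the four carries left at the end. -/
def upSum {A : Type*} [CommRing A] (x q : A) (τ : Bool → Bool → Bool → Bool → A) :
    Bool → Bool → Bool → Bool → List Bool → List Bool → A
  | u₁, v₁, u₂, v₂, a :: α, b :: β =>
    stepWt x q u₁ v₁ a true * stepWt 1 q u₂ v₂ b true *
        upSum x q τ v₁ (nextCarry u₁ a true) v₂ (nextCarry u₂ b true) α β +
      stepWt x q u₁ v₁ a false * stepWt 1 q u₂ v₂ b false *
        upSum x q τ v₁ (nextCarry u₁ a false) v₂ (nextCarry u₂ b false) α β
  | u₁, v₁, u₂, v₂, [], [] => τ u₁ v₁ u₂ v₂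
  | _, _, _, _, _, _ => 0

/-- For outer words `α` and `β`, the sum over all inner words of the weights of the two strips, with
`x` counting the dominoes added to reach `β`; no carries may be left at the end. -/
def downSum {A : Type*} [CommRing A] (x q : A) :
    Bool → Bool → Bool → Bool → List Bool → List Bool → A
  | u₁, v₁, u₂, v₂, a :: α, b :: β =>
    stepWt 1 q u₁ v₁ true a * stepWt x q u₂ v₂ true b *
        downSum x q v₁ (nextCarry u₁ true a) v₂ (nextCarry u₂ true b) α β +
      stepWt 1 q u₁ v₁ false a * stepWt x q u₂ v₂ false b *
        downSum x q v₁ (nextCarry u₁ false a) v₂ (nextCarry u₂ false b) α β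
  | false, false, false, false, [], [] => 1
  | _, _, _, _, _, _ => 0

/-- A linear map on the 16-dimensional space of functions of the four carries which intertwines the
transfer matrices of `upSum` and `downSum` for all letters of `α` and `β`. -/
def intertwine {A : Type*} [CommRing A] (x q : A) (Z : Bool → Bool → Bool → Bool → A) :
    Bool → Bool → Bool → Bool → A
  | false, false, false, false =>
      (1 - x) * (1 - q ^ 2 * x) * Z false false false false
        + x * (1 - q ^ 2 * x) * Z false true false true
        + x * (1 - q ^ 2 * x) * Z true false true false
        + q ^ 2 * x ^ 2 * Z true true true true
  | false, true, false, true =>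
      (1 - q ^ 2 * x) * Z false false false false
        - (1 - q ^ 2 * x) * Z false true false true
        + (q ^ 2 + q ^ 2 * x - 1) * Z true false true false
        - q ^ 2 * x * Z true true true true
  | true, false, true, false =>
      (1 - q ^ 2 * x) * Z false false false false
        + q ^ 2 * x * Z false true false true
        - (1 - q ^ 2 * x) * Z true false true false
        - q ^ 2 * x * Z true true true true
  | true, true, true, true =>
      q ^ 2 * (Z false false false false - Z false true false true
        - Z true false true false + Z true true true true)
  | false, true, false, false =>
      (1 - q ^ 2 * x) * Z false false false true + q ^ 2 * x * Z true false true true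
  | true, true, true, false =>
      q * Z false false false true - q * Z true false true true
  | true, false, false, false =>
      (1 - q ^ 2 * x) * Z false false true false + q * x * Z false true true true
  | true, true, false, true =>
      q ^ 2 * Z false false true false - q * Z false true true true
  | false, false, false, true =>
      (1 - q ^ 2 * x) * Z false true false false + q ^ 2 * x * Z true true true false
  | true, false, true, true =>
      q * Z false true false false - q * Z true true true false
  | false, false, true, false =>
      (1 - q ^ 2 * x) * Z true false false false + q * x * Z true true false true
  | false, true, true, true =>
      q ^ 2 * Z true false false false - q * Z true true false true
  | true, true, false, false => Z false false true true
  | false, false, true, true => Z true true false false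
  | true, false, false, true => q * Z false true true false
  | false, true, true, false => q * Z true false false true

/-- The image under `intertwine` of the functional that allows no carries at the end. -/
def endRow {A : Type*} [CommRing A] (x q : A) (u₁ v₁ u₂ v₂ : Bool) : A :=
  intertwine x q (fun a b c d => if a || b || c || d then 0 else 1) u₁ v₁ u₂ v₂

set_option maxHeartbeats 4000000 in
/-- The intertwining relation, checked letter by letter: each of the 64 cases is a polynomial
identity in `x` and `q`. -/
theorem upSum_eq_intertwine {A : Type*} [CommRing A] (x q : A) :
    ∀ (α β : List Bool), α.length = β.length → ∀ u₁ v₁ u₂ v₂ : Bool,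
      upSum x q (endRow x q) u₁ v₁ u₂ v₂ α β =
        intertwine x q (fun a b c d => downSum x q a b c d α β) u₁ v₁ u₂ v₂ := by
  intro α
  induction α with
  | nil =>
    intro β h
    obtain rfl : β = [] := by simpa using h.symm
    rintro (_ | _) (_ | _) (_ | _) (_ | _) <;> simp [upSum, endRow, intertwine, downSum]
  | cons a α ih =>
    intro β h
    obtain _ | ⟨b, β⟩ := β
    · simp at h
    replace ih := ih β (by simpa using h)
    rintro (_ | _) (_ | _) (_ | _) (_ | _) <;> cases a <;> cases b <;>
      simp [upSum, intertwine, downSum, stepWt, nextCarry, ih] <;> ring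

/-- Two leading row steps in both words absorb the intertwining map at the initial state, in which
there are no carries. -/
theorem upSum_start {A : Type*} [CommRing A] (x q : A) (α β : List Bool)
    (h : α.length = β.length) :
    upSum x q (endRow x q) false false false false (true :: true :: α) (true :: true :: β) =
      downSum x q false false false false (true :: true :: α) (true :: true :: β) := by
  rw [upSum_eq_intertwine x q _ _ (by simpa using h)]
  simp [intertwine, downSum, stepWt, nextCarry]
  ring

/-! ### The commutation relation on boundary words -/

/-- The functional that allows no carries at the end. -/
def endZero {A : Type*} [CommRing A] (u₁ v₁ u₂ v₂ : Bool) : A :=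
  if u₁ || v₁ || u₂ || v₂ then 0 else 1

/-- The part of `endRow` supported on the states in which the first strip has a carry left. -/
def endRest {A : Type*} [CommRing A] (x q : A) (u₁ v₁ u₂ v₂ : Bool) : A :=
  if u₁ || v₁ then endRow x q u₁ v₁ u₂ v₂ else 0

theorem endRow_eq {A : Type*} [CommRing A] (x q : A) (u₁ v₁ u₂ v₂ : Bool) :
    endRow x q u₁ v₁ u₂ v₂ =
      (1 - x) * (1 - q ^ 2 * x) * endZero u₁ v₁ u₂ v₂ + endRest x q u₁ v₁ u₂ v₂ := by
  cases u₁ <;> cases v₁ <;> cases u₂ <;> cases v₂ <;>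
    simp [endRow, endZero, endRest, intertwine]

theorem upSum_endRow {A : Type*} [CommRing A] (x q : A) :
    ∀ (α β : List Bool), α.length = β.length → ∀ (u₁ v₁ u₂ v₂ : Bool),
      upSum x q (endRow x q) u₁ v₁ u₂ v₂ α β =
        (1 - x) * (1 - q ^ 2 * x) * upSum x q endZero u₁ v₁ u₂ v₂ α β +
          upSum x q (endRest x q) u₁ v₁ u₂ v₂ α β := by
  intro α
  induction α with
  | nil =>
    intro β h
    obtain rfl : β = [] := by simpa using h.symm
    intros
    simp only [upSum, endRow_eq]
  | cons a α ih =>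
    intro β h
    obtain _ | ⟨b, β⟩ := β
    · simp at h
    replace ih := ih β (by simpa using h)
    intros
    simp only [upSum, ih]
    ring

/-- On words of column steps only, a first strip without carries never acquires any. -/
theorem upSum_endRest_zeros {A : Type*} [CommRing A] (x q : A) (r : ℕ) : ∀ (u₂ v₂ : Bool),
    upSum x q (endRest x q) false false u₂ v₂ (List.replicate r false) (List.replicate r false)
      = 0 := by
  induction r with
  | zero => intros; simp [upSum, endRest]
  | succ r ih =>
    intros
    simp only [List.replicate_succ, upSum]
    simp [stepWt, nextCarry, ih]

/-- While the first strip keeps a carry along `2 * j` column steps, it collects at least `j` factors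
`x`. -/
theorem dvd_upSum_zeros {A : Type*} [CommRing A] (x q : A) (j : ℕ) : ∀ (u₁ v₁ u₂ v₂ : Bool),
    x ^ j ∣ upSum x q (endRest x q) u₁ v₁ u₂ v₂
      (List.replicate (2 * j) false) (List.replicate (2 * j) false) := by
  induction j with
  | zero => intros; simp
  | succ j ih =>
    rintro (_ | _) (_ | _) (_ | _) (_ | _) <;>
      simp only [Nat.mul_succ, List.replicate_succ, upSum] <;>
      simp [stepWt, nextCarry, upSum_endRest_zeros]
    all_goals simp only [mul_add, mul_assoc, pow_succ']
    all_goals repeat' first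
      | apply dvd_add
      | exact mul_dvd_mul (dvd_refl x)
          (by repeat first | exact ih _ _ _ _ | apply Dvd.dvd.mul_left)
      | apply Dvd.dvd.mul_left

theorem dvd_upSum {A : Type*} [CommRing A] (x q : A) (j : ℕ) :
    ∀ (α β : List Bool), α.length = β.length → ∀ (u₁ v₁ u₂ v₂ : Bool),
      x ^ j ∣ upSum x q (endRest x q) u₁ v₁ u₂ v₂
        (α ++ List.replicate (2 * j) false) (β ++ List.replicate (2 * j) false) := by
  intro α
  induction α with
  | nil =>
    intro β h
    obtain rfl : β = [] := by simpa using h.symm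
    exact dvd_upSum_zeros x q j
  | cons a α ih =>
    intro β h
    obtain _ | ⟨b, β⟩ := β
    · simp at h
    replace ih := ih β (by simpa using h)
    intros
    simp only [List.cons_append, upSum]
    exact dvd_add ((ih _ _ _ _).mul_left _) ((ih _ _ _ _).mul_left _)

/-- The commutation relation of the generating functions of upper and lower strips, modulo `x ^ j`.
The two leading row steps and the `2 * j` trailing column steps embed the diagrams in a larger
box. -/
theorem up_down_congr {A : Type*} [CommRing A] (x q : A) (j : ℕ) (α β : List Bool)
    (h : α.length = β.length) :
    x ^ j ∣ downSum x q false false false false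
        (true :: true :: α ++ List.replicate (2 * j) false)
        (true :: true :: β ++ List.replicate (2 * j) false) -
      (1 - x) * (1 - q ^ 2 * x) * upSum x q endZero false false false false
        (true :: true :: α ++ List.replicate (2 * j) false)
        (true :: true :: β ++ List.replicate (2 * j) false) := by
  have h1 := upSum_start x q (α ++ List.replicate (2 * j) false)
    (β ++ List.replicate (2 * j) false) (by simpa using h)
  have h2 := upSum_endRow x q (true :: true :: α ++ List.replicate (2 * j) false)
    (true :: true :: β ++ List.replicate (2 * j) false) (by simpa using h)
    false false false false
  simp only [List.cons_append] at h1 h2 ⊢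
  rw [← h1, h2, add_sub_cancel_left]
  exact dvd_upSum x q j (true :: true :: α) (true :: true :: β) (by simpa using h) _ _ _ _

/-- The automaton behind `stepWt`: it reads an inner and an outer word with given carries and returns
the number of dominoes and the spin of the strip, or `none` if there is no strip. -/
def run : Bool → Bool → List Bool → List Bool → Option (ℕ × ℕ)
  | u, v, a :: α, y :: l =>
    if (u && a) || (y && !(u || a)) then none
    else (run v (nextCarry u a y) α l).map
      fun p => (p.1 + (nextCarry u a y).toNat, p.2 + (v && (u || a)).toNat)
  | false, false, [], [] => some (0, 0)
  | _, _, _, _ => none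

/-- The monomial `x ^ size * q ^ spin` of the outcome of `run`. -/
def runWt {A : Type*} [CommRing A] (x q : A) (o : Option (ℕ × ℕ)) : A :=
  o.elim 0 fun p => x ^ p.1 * q ^ p.2

theorem runWt_cons {A : Type*} [CommRing A] (x q : A) (u v a y : Bool) (α l : List Bool) :
    runWt x q (run u v (a :: α) (y :: l)) =
      stepWt x q u v a y * runWt x q (run v (nextCarry u a y) α l) := by
  cases u <;> cases v <;> cases a <;> cases y <;> simp only [run] <;>
    cases run _ _ α l <;> simp [runWt, stepWt, nextCarry] <;> ring

/-- All words of length `n`. -/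
def words : ℕ → Finset (List Bool)
  | 0 => {[]}
  | n + 1 => (words n).image (List.cons true) ∪ (words n).image (List.cons false)

theorem mem_words {n : ℕ} : ∀ {w : List Bool}, w ∈ words n ↔ w.length = n := by
  induction n with
  | zero => simp [words]
  | succ n ih =>
    rintro (_ | ⟨a, w⟩)
    · simp [words]
    · cases a <;> simp [words, ih]

theorem sum_words_succ {A : Type*} [CommRing A] (n : ℕ) (f : List Bool → A) :
    ∑ w ∈ words (n + 1), f w =
      ∑ w ∈ words n, f (true :: w) + ∑ w ∈ words n, f (false :: w) := by
  rw [words, Finset.sum_union, Finset.sum_image (by simp), Finset.sum_image (by simp)]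
  rw [Finset.disjoint_left]
  simp only [Finset.mem_image]
  rintro _ ⟨a, -, rfl⟩ ⟨b, -, h⟩
  simp at h

theorem sum_up {A : Type*} [CommRing A] (x q : A) :
    ∀ (α β : List Bool), α.length = β.length → ∀ u₁ v₁ u₂ v₂ : Bool,
      ∑ w ∈ words α.length, runWt x q (run u₁ v₁ α w) * runWt 1 q (run u₂ v₂ β w) =
        upSum x q endZero u₁ v₁ u₂ v₂ α β := by
  intro α
  induction α with
  | nil =>
    intro β h
    obtain rfl : β = [] := by simpa using h.symm
    rintro (_ | _) (_ | _) (_ | _) (_ | _) <;> simp [upSum, words, run, runWt, endZero]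
  | cons a α ih =>
    intro β h
    obtain _ | ⟨b, β⟩ := β
    · simp at h
    replace ih := ih β (by simpa using h)
    intros
    simp only [List.length_cons, sum_words_succ, upSum, runWt_cons, ← ih, Finset.mul_sum]
    congr 1 <;> refine Finset.sum_congr rfl fun _ _ => by ring

theorem sum_down {A : Type*} [CommRing A] (x q : A) :
    ∀ (α β : List Bool), α.length = β.length → ∀ u₁ v₁ u₂ v₂ : Bool,
      ∑ w ∈ words α.length, runWt 1 q (run u₁ v₁ w α) * runWt x q (run u₂ v₂ w β) =
        downSum x q u₁ v₁ u₂ v₂ α β := by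
  intro α
  induction α with
  | nil =>
    intro β h
    obtain rfl : β = [] := by simpa using h.symm
    rintro (_ | _) (_ | _) (_ | _) (_ | _) <;> simp [downSum, words, run, runWt]
  | cons a α ih =>
    intro β h
    obtain _ | ⟨b, β⟩ := β
    · simp at h
    replace ih := ih β (by simpa using h)
    intros
    simp only [List.length_cons, sum_words_succ, downSum, runWt_cons, ← ih, Finset.mul_sum]
    congr 1 <;> refine Finset.sum_congr rfl fun _ _ => by ring

/-! ### The automaton in terms of column heights -/

/-- The column heights encoded by a boundary word, read from the bottom left: the height of a column
is the number of row steps (`true`) after its column step (`false`). -/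
def cols : List Bool → List ℕ
  | [] => []
  | true :: w => cols w
  | false :: w => w.count true :: cols w

/-- `ColStrip as ls k s`: the column heights `ls` arise from `as` by adding a horizontal domino strip
with `k` dominoes and spin `s`.  Each column is unchanged, or receives a vertical domino, or shares
with its right neighbour a horizontal domino. -/
inductive ColStrip : List ℕ → List ℕ → ℕ → ℕ → Prop
  | nil : ColStrip [] [] 0 0
  | skip {as ls k s} (a : ℕ) : ColStrip as ls k s → ColStrip (a :: as) (a :: ls) k s
  | vert {as ls k s} (a : ℕ) : ColStrip as ls k s →
      ColStrip (a :: as) ((a + 2) :: ls) (k + 1) (s + 1)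
  | horiz {as ls k s} (a : ℕ) : ColStrip as ls k s →
      ColStrip (a :: a :: as) ((a + 1) :: (a + 1) :: ls) (k + 1) s

theorem le_of_mem_cols {w : List Bool} : ∀ {h : ℕ}, h ∈ cols w → h ≤ w.count true := by
  induction w with
  | nil => simp [cols]
  | cons a w ih =>
    intro h hh
    cases a
    · simp only [cols, List.mem_cons] at hh
      rcases hh with rfl | hh
      · simp
      · simpa using ih hh
    · have := ih (h := h) (by simpa [cols] using hh)
      simp; omega

theorem ColStrip.pos {as ls : List ℕ} {l k s A : ℕ} (h : ColStrip as (l :: ls) k s)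
    (hA : ∀ a ∈ as, a ≤ A) (hl : A < l) : ∃ k', k = k' + 1 := by
  cases h with
  | skip a h => have := hA l (by simp); omega
  | vert a h => exact ⟨_, rfl⟩
  | horiz a h => exact ⟨_, rfl⟩

theorem colStrip_add_two {as ls : List ℕ} {k s A : ℕ} (hA : ∀ a ∈ as, a ≤ A) :
    ColStrip as ((A + 2) :: ls) (k + 1) s ↔
      ∃ as' s', as = A :: as' ∧ s = s' + 1 ∧ ColStrip as' ls k s' := by
  constructor
  · intro h
    generalize hl : (A + 2) :: ls = l at h
    generalize hk : k + 1 = k1 at h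
    cases h with
    | nil => simp at hl
    | skip a h =>
      have := hA a (by simp); simp at hl; omega
    | vert a h =>
      simp at hl hk
      obtain ⟨rfl, rfl⟩ := hl
      subst hk
      exact ⟨_, _, rfl, rfl, h⟩
    | horiz a h =>
      have := hA a (by simp); simp at hl; omega
  · rintro ⟨as', s', rfl, rfl, h⟩
    exact .vert _ h

theorem colStrip_add_one {as ls : List ℕ} {k s A : ℕ}  :
    ColStrip (A :: as) ((A + 1) :: ls) (k + 1) s ↔
      ∃ as' ls', as = A :: as' ∧ ls = (A + 1) :: ls' ∧ ColStrip as' ls' k s := by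
  constructor
  · intro h
    generalize hl : (A + 1) :: ls = l at h
    generalize hk : k + 1 = k1 at h
    cases h with
    | skip a h => simp at hl
    | vert a h => simp at hl
    | horiz a h =>
      simp at hl hk
      subst hl hk
      exact ⟨_, _, rfl, rfl, h⟩
  · rintro ⟨as', ls', rfl, rfl, h⟩
    exact .horiz _ h

theorem colStrip_same {as ls : List ℕ} {k s A : ℕ}  :
    ColStrip (A :: as) (A :: ls) k s ↔ ColStrip as ls k s := by
  constructor
  · intro h
    generalize hl : A :: ls = l at h
    cases h with
    | skip a h => simp at hl; subst hl; exact h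
    | vert a h => simp at hl
    | horiz a h => simp at hl
  · exact .skip _

theorem not_colStrip_lt {as ls : List ℕ} {k s A : ℕ} (h : ColStrip (A :: as) ls k s)
    (hl : ∀ l ∈ ls, l < A) : False := by
  cases h with
  | skip a h => simpa using hl A
  | vert a h => have := hl (A + 2) (by simp); omega
  | horiz a h => have := hl (A + 1) (by simp); omega

/-- The meaning, in terms of column heights, of a successful `run` with carries `u` and `v`.  With
`u`, the remaining inner word must begin with a column step, and that column is already matched
with an outer column read before.  With `v`, an outer column has been read which is not yet matched
with an inner one; its domino has been counted at that point, whence the `k + 1`. -/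
def RunSem : Bool → Bool → List Bool → List Bool → ℕ → ℕ → Prop
  | false, false, α, l, k, s => ColStrip (cols α) (cols l) k s
  | false, true, α, l, k, s => ColStrip (cols α) ((α.count true + 1) :: cols l) (k + 1) s
  | true, false, α, l, k, s =>
      ∃ as, cols α = α.count true :: as ∧ ColStrip as (cols l) k s
  | true, true, α, l, k, s =>
      ∃ as, cols α = α.count true :: as ∧
        ColStrip as ((α.count true + 2) :: cols l) (k + 1) s

theorem run_iff_runSem : ∀ (α l : List Bool), α.length = l.length →
    ∀ (u v : Bool) (k s : ℕ), l.count true = α.count true + u.toNat + v.toNat →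
      (run u v α l = some (k, s) ↔ RunSem u v α l k s) := by
  intro α
  induction α with
  | nil =>
    intro l h
    obtain rfl : l = [] := by simpa using h.symm
    rintro (_ | _) (_ | _) k s <;> simp [run, RunSem, cols]
    constructor
    · rintro ⟨rfl, rfl⟩; exact .nil
    · rintro ⟨⟩; simp
  | cons a α ih =>
    intro l h
    obtain _ | ⟨y, l⟩ := l
    · simp at h
    replace ih := ih l (by simpa using h)
    have hle : ∀ c ∈ cols α, c ≤ α.count true := fun c => le_of_mem_cols
    have hll : ∀ c ∈ cols l, c ≤ l.count true := fun c => le_of_mem_cols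
    have hno : ∀ as, cols α ≠ (α.count true + 1) :: as := by
      intro as e
      have := hle (α.count true + 1) (by simp [e])
      omega
    rintro (_ | _) (_ | _) k s hc <;> cases a <;> cases y <;>
      simp [run, nextCarry] at hc ⊢
    · rw [ih false false _ _ (by simpa using hc)]
      simp [RunSem, cols, hc, colStrip_same]
    · intro hS
      exact not_colStrip_lt hS fun c hcc => by have := hll c hcc; omega
    · rw [hc] at hll
      simp only [RunSem, cols, hc]
      constructor
      · rintro ⟨a, hr, rfl⟩
        exact (ih false true a s (by simp [hc])).1 hr
      · intro hS
        obtain ⟨k', rfl⟩ := hS.pos hle (Nat.lt_succ_self _)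
        exact ⟨k', (ih false true k' s (by simp [hc])).2 hS, rfl⟩
    · rw [ih false false _ _ (by simpa using hc)]
      simp [RunSem, cols]
    · rw [ih true false _ _ (by simpa using hc)]
      simp only [RunSem, cols, List.count_cons_of_ne, ne_eq, Bool.false_eq_true, not_false_eq_true,
        colStrip_add_one, hc]
      constructor
      · rintro ⟨as, h1, h2⟩; exact ⟨as, _, h1, rfl, h2⟩
      · rintro ⟨as, ls, h1, h2, h3⟩
        simp at h2; subst h2
        exact ⟨as, h1, h3⟩
    · simp only [RunSem, cols, List.count_cons_of_ne, ne_eq, Bool.false_eq_true, not_false_eq_true,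
        colStrip_add_one]
      rintro ⟨as, ls, h1, h2, h3⟩
      have := hll (α.count true + 1) (by simp [h2])
      omega
    · simp only [RunSem, cols, List.count_cons_self, hc, add_assoc, Nat.reduceAdd,
        colStrip_add_two hle]
      constructor
      · rintro ⟨a, b, hr, rfl, rfl⟩
        obtain ⟨as, h1, h2⟩ := (ih true true a b (by simp [hc])).1 hr
        exact ⟨as, b, h1, rfl, h2⟩
      · rintro ⟨as, s', h1, rfl, h2⟩
        obtain ⟨k', rfl⟩ := h2.pos (A := α.count true)
          (fun a ha => hle a (by simp [h1, ha])) (by omega)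
        exact ⟨k', s', (ih true true k' s' (by simp [hc])).2 ⟨as, h1, h2⟩, rfl, rfl⟩
    · simp only [RunSem, cols, List.count_cons_self, add_assoc, Nat.reduceAdd,
        colStrip_add_two hle]
      constructor
      · rintro ⟨b, hr, rfl⟩
        obtain ⟨as, h1, h2⟩ := (ih true false k b (by simp; omega)).1 hr
        exact ⟨as, b, h1, rfl, h2⟩
      · rintro ⟨as, s', h1, rfl, h2⟩
        exact ⟨s', (ih true false k s' (by simp; omega)).2 ⟨as, h1, h2⟩, rfl⟩
    · simp only [RunSem, cols, List.count_cons_of_ne, ne_eq, Bool.false_eq_true, not_false_eq_true,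
        hc, List.cons.injEq, true_and, exists_eq_left']
      constructor
      · rintro ⟨a, hr, rfl⟩
        exact (ih false true a s (by simp [hc])).1 hr
      · intro hS
        obtain ⟨k', rfl⟩ := hS.pos hle (Nat.lt_succ_self _)
        exact ⟨k', (ih false true k' s (by simp [hc])).2 hS, rfl⟩
    · rw [ih false false _ _ (by simp; omega)]
      simp [RunSem, cols]
    · rintro ⟨as, h1, -⟩
      exact hno as (by simpa [cols] using h1)
    · rintro ⟨as, h1, -⟩
      exact hno as (by simpa [cols] using h1)
    · simp only [RunSem, cols, List.count_cons_of_ne, ne_eq, Bool.false_eq_true, not_false_eq_true,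
        hc, List.cons.injEq, true_and, exists_eq_left', add_assoc, Nat.reduceAdd,
        colStrip_add_two hle]
      constructor
      · rintro ⟨a, b, hr, rfl, rfl⟩
        obtain ⟨as, h1, h2⟩ := (ih true true a b (by simp [hc])).1 hr
        exact ⟨as, b, h1, rfl, h2⟩
      · rintro ⟨as, s', h1, rfl, h2⟩
        obtain ⟨k', rfl⟩ := h2.pos (A := α.count true)
          (fun a ha => hle a (by simp [h1, ha])) (by omega)
        exact ⟨k', s', (ih true true k' s' (by simp [hc])).2 ⟨as, h1, h2⟩, rfl, rfl⟩
    · simp only [RunSem, cols, List.count_cons_of_ne, ne_eq, Bool.false_eq_true, not_false_eq_true,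
        List.cons.injEq, true_and, exists_eq_left', colStrip_add_two hle]
      constructor
      · rintro ⟨b, hr, rfl⟩
        obtain ⟨as, h1, h2⟩ := (ih true false k b (by simp; omega)).1 hr
        exact ⟨as, b, h1, rfl, h2⟩
      · rintro ⟨as, s', h1, rfl, h2⟩
        exact ⟨s', (ih true false k s' (by simp; omega)).2 ⟨as, h1, h2⟩, rfl⟩
    · rintro ⟨as, h1, -⟩
      exact hno as (by simpa [cols] using h1)
    · rintro ⟨as, h1, -⟩
      exact hno as (by simpa [cols] using h1)

theorem run_iff_colStrip {α l : List Bool} (hlen : α.length = l.length)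
    (hc : l.count true = α.count true) {k s : ℕ} :
    run false false α l = some (k, s) ↔ ColStrip (cols α) (cols l) k s :=
  run_iff_runSem α l hlen false false k s (by simpa using hc)

theorem count_of_run : ∀ (α l : List Bool) (u v : Bool) (p : ℕ × ℕ),
    run u v α l = some p → l.count true = α.count true + u.toNat + v.toNat := by
  intro α
  induction α with
  | nil => rintro (_ | _) (_ | _) (_ | _) p <;> simp [run]
  | cons a α ih =>
    rintro (_ | ⟨y, l⟩) u v p hp
    · simp [run] at hp
    · cases u <;> cases v <;> cases a <;> cases y <;> simp [run, nextCarry] at hp ⊢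
      all_goals first
        | (obtain ⟨a, b, hr, _⟩ := hp; have := ih _ _ _ _ hr; simp at this; omega)
        | (have := ih _ _ _ _ hp; simp at this; omega)

/-! ### Dominoes and column descriptions of tilings -/

/-- The vertical domino in column `c` with upper cell in row `a`. -/
def vDom (a c : ℕ) : Finset Cell := {(a, c), (a + 1, c)}

/-- The horizontal domino in row `a` with left cell in column `c`. -/
def hDom (a c : ℕ) : Finset Cell := {(a, c), (a, c + 1)}

theorem mem_vDom {a c : ℕ} {p : Cell} : p ∈ vDom a c ↔ p = (a, c) ∨ p = (a + 1, c) := by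
  simp [vDom]

theorem mem_hDom {a c : ℕ} {p : Cell} : p ∈ hDom a c ↔ p = (a, c) ∨ p = (a, c + 1) := by
  simp [hDom]

theorem card_vDom (a c : ℕ) : (vDom a c).card = 2 := by
  rw [vDom, Finset.card_pair]; simp

theorem card_hDom (a c : ℕ) : (hDom a c).card = 2 := by
  rw [hDom, Finset.card_pair]; simp

theorem ribbonSpin_vDom (a c : ℕ) : ribbonSpin (vDom a c) = 1 := by
  rw [ribbonSpin, vDom, Finset.image_insert, Finset.image_singleton, Finset.card_pair (by simp)]

theorem ribbonSpin_hDom (a c : ℕ) : ribbonSpin (hDom a c) = 0 := by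
  simp [ribbonSpin, hDom, Finset.image_insert, Finset.image_singleton]

theorem cellsConnected_pair {a b : Cell} (h : Adj a b) : CellsConnected {a, b} := by
  have h' : Adj b a := by unfold Adj at *; omega
  intro x hx y hy
  simp only [Finset.mem_insert, Finset.mem_singleton] at hx hy
  rcases hx with rfl | rfl <;> rcases hy with rfl | rfl
  · exact .refl
  · exact .single ⟨by simp, h⟩
  · exact .single ⟨by simp, h'⟩
  · exact .refl

/-- The Young diagram with at most `n` columns, whose column heights are given by `f`. -/
def ydOf (n : ℕ) (f : ℕ → ℕ) (hf : Antitone f) : YoungDiagram where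
  cells := (Finset.range (f 0) ×ˢ Finset.range n).filter fun p => p.1 < f p.2
  isLowerSet := by
    rintro ⟨i, j⟩ ⟨i', j'⟩ h hm
    simp only [Prod.mk_le_mk] at h
    simp only [Finset.coe_filter, Finset.mem_product, Finset.mem_range, Set.mem_ofPred_eq] at hm ⊢
    have := hf h.2
    omega

theorem mem_ydOf {n : ℕ} {f : ℕ → ℕ} {hf : Antitone f} {i j : ℕ} :
    (i, j) ∈ ydOf n f hf ↔ j < n ∧ i < f j := by
  rw [← YoungDiagram.mem_cells]
  simp only [ydOf, Finset.mem_filter, Finset.mem_product, Finset.mem_range]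
  have := hf (Nat.zero_le j)
  omega

theorem isRibbon_vDom (a c : ℕ) : IsRibbon 2 (vDom a c) := by
  refine ⟨card_vDom a c, cellsConnected_pair (by simp [Adj]), ?_, ?_⟩
  · rintro ⟨i, j, h1, h2, h3, h4⟩
    simp [mem_vDom] at h1 h3
    omega
  · have hf : Antitone fun j => if j < c then a + 2 else a := by
      intro i j h
      dsimp only
      split_ifs <;> omega
    refine ⟨ydOf (c + 1) (fun _ => a + 2) antitone_const,
      ydOf (c + 1) (fun j => if j < c then a + 2 else a) hf, ?_, ?_⟩
    · rintro ⟨i, j⟩ h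
      simp only [mem_ydOf] at h ⊢
      split_ifs at h <;> omega
    · ext ⟨i, j⟩
      simp only [mem_vDom, Finset.mem_sdiff, YoungDiagram.mem_cells, mem_ydOf, Prod.mk.injEq]
      split_ifs <;> omega

theorem isRibbon_hDom (a c : ℕ) : IsRibbon 2 (hDom a c) := by
  refine ⟨card_hDom a c, cellsConnected_pair (by simp [Adj]), ?_, ?_⟩
  · rintro ⟨i, j, h1, h2, h3, h4⟩
    simp [mem_hDom] at h1 h2
    omega
  · have hf : Antitone fun j => if j < c then a + 1 else a := by
      intro i j h
      dsimp only
      split_ifs <;> omega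
    refine ⟨ydOf (c + 2) (fun _ => a + 1) antitone_const,
      ydOf (c + 2) (fun j => if j < c then a + 1 else a) hf, ?_, ?_⟩
    · rintro ⟨i, j⟩ h
      simp only [mem_ydOf] at h ⊢
      split_ifs at h <;> omega
    · ext ⟨i, j⟩
      simp only [mem_hDom, Finset.mem_sdiff, YoungDiagram.mem_cells, mem_ydOf, Prod.mk.injEq]
      split_ifs <;> omega

theorem eq_dom_of_isRibbon {R : Finset Cell} (h : IsRibbon 2 R) :
    ∃ a c, R = vDom a c ∨ R = hDom a c := by
  obtain ⟨hc, hconn, -, -⟩ := h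
  obtain ⟨p, p', hne, rfl⟩ := Finset.card_eq_two.1 hc
  have hr := hconn p (by simp) p' (by simp)
  have hadj : Adj p p' := by
    rcases hr.cases_head with h | ⟨y, ⟨hy, ha⟩, -⟩
    · exact absurd h hne
    · simp only [Finset.mem_insert, Finset.mem_singleton] at hy
      rcases hy with rfl | rfl
      · unfold Adj at ha; omega
      · exact ha
  obtain ⟨i, j⟩ := p
  obtain ⟨i', j'⟩ := p'
  simp only [Adj] at hadj
  rcases hadj with ⟨rfl, rfl | rfl⟩ | ⟨rfl, rfl | rfl⟩
  · exact ⟨i, j, .inr rfl⟩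
  · exact ⟨i, j', .inr (Finset.pair_comm _ _)⟩
  · exact ⟨i, j, .inl rfl⟩
  · exact ⟨i', j, .inl (Finset.pair_comm _ _)⟩

/-- The relation `ColStrip` for columns numbered from `c` on, which also records the set `T` of
dominoes. -/
inductive StripTiles : ℕ → List ℕ → List ℕ → ℕ → ℕ → Finset (Finset Cell) → Prop
  | nil (c : ℕ) : StripTiles c [] [] 0 0 ∅
  | skip {c as ls k s T} (a : ℕ) : StripTiles (c + 1) as ls k s T →
      StripTiles c (a :: as) (a :: ls) k s T
  | vert {c as ls k s T} (a : ℕ) : StripTiles (c + 1) as ls k s T →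
      StripTiles c (a :: as) ((a + 2) :: ls) (k + 1) (s + 1) (insert (vDom a c) T)
  | horiz {c as ls k s T} (a : ℕ) : StripTiles (c + 2) as ls k s T →
      StripTiles c (a :: a :: as) ((a + 1) :: (a + 1) :: ls) (k + 1) s (insert (hDom a c) T)

theorem StripTiles.colStrip {c as ls k s T} (h : StripTiles c as ls k s T) :
    ColStrip as ls k s := by
  induction h with
  | nil => exact .nil
  | skip a _ ih => exact .skip a ih
  | vert a _ ih => exact .vert a ih
  | horiz a _ ih => exact .horiz a ih

theorem ColStrip.exists_tiles {as ls k s} (h : ColStrip as ls k s) :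
    ∀ c, ∃ T, StripTiles c as ls k s T := by
  induction h with
  | nil => exact fun c => ⟨_, .nil c⟩
  | skip a _ ih => exact fun c => let ⟨_, hT⟩ := ih (c + 1); ⟨_, .skip a hT⟩
  | vert a _ ih => exact fun c => let ⟨_, hT⟩ := ih (c + 1); ⟨_, .vert a hT⟩
  | horiz a _ ih => exact fun c => let ⟨_, hT⟩ := ih (c + 2); ⟨_, .horiz a hT⟩

theorem StripTiles.unique {c as ls k s T} (h : StripTiles c as ls k s T) :
    ∀ {k' s' T'}, StripTiles c as ls k' s' T' → T = T' := by
  induction h with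
  | nil => rintro _ _ _ ⟨⟩; rfl
  | skip a _ ih =>
    intro k' s' T' h'
    cases h' with
    | skip _ h' => exact ih h'
  | vert a _ ih =>
    intro k' s' T' h'
    cases h' with
    | vert _ h' => rw [ih h']
  | horiz a _ ih =>
    intro k' s' T' h'
    cases h' with
    | horiz _ h' => rw [ih h']

theorem StripTiles.col_ge {c as ls k s T} (h : StripTiles c as ls k s T) :
    ∀ R ∈ T, ∀ p ∈ R, c ≤ p.2 := by
  induction h with
  | nil => simp
  | skip a _ ih => exact fun R hR p hp => (Nat.le_succ _).trans (ih R hR p hp)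
  | vert a _ ih =>
    intro R hR p hp
    rcases Finset.mem_insert.1 hR with rfl | hR
    · rcases mem_vDom.1 hp with rfl | rfl <;> simp
    · have := ih R hR p hp; omega
  | horiz a _ ih =>
    intro R hR p hp
    rcases Finset.mem_insert.1 hR with rfl | hR
    · rcases mem_hDom.1 hp with rfl | rfl <;> simp
    · have := ih R hR p hp; omega

theorem StripTiles.vDom_notMem {c c' a as ls k s T} (h : StripTiles c as ls k s T) (hc : c' < c) :
    vDom a c' ∉ T := fun hm => by
  have := h.col_ge _ hm (a, c') (by simp [vDom]); simp at this; omega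

theorem StripTiles.hDom_notMem {c c' a as ls k s T} (h : StripTiles c as ls k s T) (hc : c' < c) :
    hDom a c' ∉ T := fun hm => by
  have := h.col_ge _ hm (a, c') (by simp [hDom]); simp at this; omega

theorem StripTiles.card_eq {c as ls k s T} (h : StripTiles c as ls k s T) : T.card = k := by
  induction h with
  | nil => simp
  | skip a _ ih => exact ih
  | vert a h ih => rw [Finset.card_insert_of_notMem (h.vDom_notMem (by omega)), ih]
  | horiz a h ih => rw [Finset.card_insert_of_notMem (h.hDom_notMem (by omega)), ih]

theorem StripTiles.spin_eq {c as ls k s T} (h : StripTiles c as ls k s T) :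
    tilingSpin T = s := by
  induction h with
  | nil => simp [tilingSpin]
  | skip a _ ih => exact ih
  | vert a h ih =>
    rw [tilingSpin, Finset.sum_insert (h.vDom_notMem (by omega)), ribbonSpin_vDom,
      ← tilingSpin, ih, add_comm]
  | horiz a h ih =>
    rw [tilingSpin, Finset.sum_insert (h.hDom_notMem (by omega)), ribbonSpin_hDom,
      ← tilingSpin, ih, zero_add]

/-- The list `[f c, …, f (c + r - 1)]`. -/
def colsFrom (f : ℕ → ℕ) : ℕ → ℕ → List ℕ
  | _, 0 => []
  | c, r + 1 => f c :: colsFrom f (c + 1) r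

/-! ### Horizontal domino strips column by column -/

theorem topRightCell_vDom {a c : ℕ} {p : Cell} : TopRightCell (vDom a c) p ↔ p = (a, c) := by
  constructor
  · rintro ⟨hp, h⟩
    have h1 := h (a, c) (by simp [vDom])
    rcases mem_vDom.1 hp with rfl | rfl
    · rfl
    · simp at h1
  · rintro rfl
    refine ⟨by simp [vDom], fun d hd => ?_⟩
    rcases mem_vDom.1 hd with rfl | rfl <;> simp

theorem topRightCell_hDom {a c : ℕ} {p : Cell} : TopRightCell (hDom a c) p ↔ p = (a, c + 1) := by
  constructor
  · rintro ⟨hp, h⟩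
    have h1 := h (a, c + 1) (by simp [hDom])
    rcases mem_hDom.1 hp with rfl | rfl
    · simp at h1
    · rfl
  · rintro rfl
    refine ⟨by simp [hDom], fun d hd => ?_⟩
    rcases mem_hDom.1 hd with rfl | rfl <;> simp

section Forward

variable {A L : ℕ → ℕ} {S : Finset Cell} {T : Finset (Finset Cell)}

theorem tile_subset (hT : IsHStripTiling 2 S T) {R : Finset Cell} (hR : R ∈ T) {p : Cell}
    (hp : p ∈ R) : p ∈ S := by
  rw [← hT.1.2.2]
  exact Finset.mem_biUnion.2 ⟨R, hR, hp⟩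

/-- By the northern condition a vertical domino starts right below the inner shape. -/
theorem vDom_inner (hS : ∀ i j, (i, j) ∈ S ↔ A j ≤ i ∧ i < L j)
    (hT : IsHStripTiling 2 S T) {a c : ℕ} (hR : vDom a c ∈ T) : A c = a := by
  have h1 := (hS _ _).1 (tile_subset hT hR (p := (a, c)) (by simp [vDom]))
  have h2 := hT.2 _ hR (a, c) (topRightCell_vDom.2 rfl)
  simp only [hS] at h2
  omega

/-- By the northern condition both cells of a horizontal domino lie right below the inner
shape; for the left cell this uses that the inner column heights decrease. -/
theorem hDom_inner (hA : Antitone A) (hS : ∀ i j, (i, j) ∈ S ↔ A j ≤ i ∧ i < L j)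
    (hT : IsHStripTiling 2 S T) {a c : ℕ} (hR : hDom a c ∈ T) : A c = a ∧ A (c + 1) = a := by
  have h1 := (hS _ _).1 (tile_subset hT hR (p := (a, c)) (by simp [hDom]))
  have h3 := (hS _ _).1 (tile_subset hT hR (p := (a, c + 1)) (by simp [hDom]))
  have h2 := hT.2 _ hR (a, c + 1) (topRightCell_hDom.2 rfl)
  have h4 := hA (Nat.le_succ c)
  simp only [hS] at h2
  simp only [Nat.succ_eq_add_one] at h4
  omega

theorem inner_mem_tile (hA : Antitone A) (hS : ∀ i j, (i, j) ∈ S ↔ A j ≤ i ∧ i < L j)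
    (hT : IsHStripTiling 2 S T) {R : Finset Cell} (hR : R ∈ T) {p : Cell} (hp : p ∈ R) :
    (A p.2, p.2) ∈ R := by
  obtain ⟨a, c, rfl | rfl⟩ := eq_dom_of_isRibbon (hT.1.1 R hR)
  · have h := vDom_inner hS hT hR
    rcases mem_vDom.1 hp with rfl | rfl <;> simp [mem_vDom, h]
  · have h := hDom_inner hA hS hT hR
    rcases mem_hDom.1 hp with rfl | rfl <;> simp [mem_hDom, h]

/-- Each column of a horizontal domino strip meets at most one domino. -/
theorem tile_unique (hA : Antitone A) (hS : ∀ i j, (i, j) ∈ S ↔ A j ≤ i ∧ i < L j)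
    (hT : IsHStripTiling 2 S T) {R R' : Finset Cell} (hR : R ∈ T) (hR' : R' ∈ T) {p p' : Cell}
    (hp : p ∈ R) (hp' : p' ∈ R') (hpp : p.2 = p'.2) : R = R' := by
  by_contra hne
  have h1 := inner_mem_tile hA hS hT hR hp
  have h2 := inner_mem_tile hA hS hT hR' hp'
  rw [← hpp] at h2
  exact Finset.disjoint_left.1 (hT.1.2.1 hR hR' hne) h1 h2

theorem mem_tile_of_mem (hA : Antitone A) (hS : ∀ i j, (i, j) ∈ S ↔ A j ≤ i ∧ i < L j)
    (hT : IsHStripTiling 2 S T) {R : Finset Cell} (hR : R ∈ T) {p : Cell}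
    (hp : p ∈ R) {i : ℕ} (hi : (i, p.2) ∈ S) : (i, p.2) ∈ R := by
  rw [← hT.1.2.2] at hi
  obtain ⟨R', hR', hi⟩ := Finset.mem_biUnion.1 hi
  rwa [tile_unique hA hS hT hR hR' hp hi rfl]

theorem vDom_outer (hA : Antitone A) (hS : ∀ i j, (i, j) ∈ S ↔ A j ≤ i ∧ i < L j)
    (hT : IsHStripTiling 2 S T) {a c : ℕ} (hR : vDom a c ∈ T) : L c = a + 2 := by
  have h1 := (hS _ _).1 (tile_subset hT hR (p := (a + 1, c)) (by simp [vDom]))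
  by_contra hne
  have h := mem_tile_of_mem hA hS hT hR (p := (a + 1, c)) (by simp [vDom]) (i := a + 2)
    ((hS _ _).2 (by dsimp only; omega))
  simp [mem_vDom] at h

theorem hDom_outer (hA : Antitone A) (hS : ∀ i j, (i, j) ∈ S ↔ A j ≤ i ∧ i < L j)
    (hT : IsHStripTiling 2 S T) {a c : ℕ} (hR : hDom a c ∈ T) :
    L c = a + 1 ∧ L (c + 1) = a + 1 := by
  have h1 := (hS _ _).1 (tile_subset hT hR (p := (a, c)) (by simp [hDom]))
  have h2 := (hS _ _).1 (tile_subset hT hR (p := (a, c + 1)) (by simp [hDom]))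
  constructor
  · by_contra hne
    have h := mem_tile_of_mem hA hS hT hR (p := (a, c)) (by simp [hDom]) (i := a + 1)
      ((hS _ _).2 (by dsimp only; omega))
    simp [mem_hDom] at h
  · by_contra hne
    have h := mem_tile_of_mem hA hS hT hR (p := (a, c + 1)) (by simp [hDom]) (i := a + 1)
      ((hS _ _).2 (by dsimp only; omega))
    simp [mem_hDom] at h

/-- Reading a horizontal domino strip column by column, from a column `c` at which no
horizontal domino is cut in two. -/
theorem exists_stripTiles (hA : Antitone A) (hAL : ∀ j, A j ≤ L j)
    (hS : ∀ i j, (i, j) ∈ S ↔ A j ≤ i ∧ i < L j) (hT : IsHStripTiling 2 S T) (r : ℕ) :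
    ∀ c, (∀ a c', hDom a c' ∈ T → c' + 1 ≠ c) → (∀ j, c + r ≤ j → A j = L j) →
      ∃ k s, StripTiles c (colsFrom A c r) (colsFrom L c r) k s
        (T.filter fun R => ∀ p ∈ R, c ≤ p.2) := by
  induction r using Nat.strong_induction_on with
  | _ r ih =>
  intro c hfresh hend
  rcases r with - | r
  · refine ⟨0, 0, ?_⟩
    rw [Finset.filter_eq_empty_iff.2]
    · exact .nil c
    · intro R hR hcol
      obtain ⟨p, hp⟩ : R.Nonempty := by
        rw [← Finset.card_pos, (hT.1.1 R hR).1]; norm_num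
      have h1 := (hS p.1 p.2).1 (tile_subset hT hR hp)
      have h2 := hend p.2 (hcol p hp)
      omega
  · by_cases hc : A c = L c
    · have hno : ∀ R ∈ T, ∀ p ∈ R, p.2 ≠ c := by
        rintro R hR p hp rfl
        have h1 := (hS p.1 p.2).1 (tile_subset hT hR hp)
        omega
      obtain ⟨k, s, h⟩ := ih r (by omega) (c + 1)
        (fun a c' hm h => hno _ hm (a, c') (by simp [hDom]) (by simpa using h))
        (fun j hj => hend j (by omega))
      refine ⟨k, s, ?_⟩
      rw [colsFrom, colsFrom, ← hc]
      refine .skip (A c) ?_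
      convert h using 1
      refine Finset.filter_congr fun R hR => forall₂_congr fun p hp => ?_
      have := hno R hR p hp
      omega
    · have hmem : (A c, c) ∈ S := (hS _ _).2 ⟨le_rfl, lt_of_le_of_ne (hAL c) hc⟩
      rw [← hT.1.2.2] at hmem
      obtain ⟨R, hR, hm⟩ := Finset.mem_biUnion.1 hmem
      simp only [id] at hm
      obtain ⟨a, c', rfl | rfl⟩ := eq_dom_of_isRibbon (hT.1.1 R hR)
      · obtain rfl : c' = c := by
          simp only [mem_vDom, Prod.mk.injEq] at hm; omega
        have hAa := vDom_inner hS hT hR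
        have hLa := vDom_outer hA hS hT hR
        obtain ⟨k, s, h⟩ := ih r (by omega) (c' + 1)
          (by
            intro a' c'' hm' h
            obtain rfl : c'' = c' := by omega
            have := hDom_outer hA hS hT hm'
            have := hDom_inner hA hS hT hm'
            omega)
          (fun j hj => hend j (by omega))
        refine ⟨k + 1, s + 1, ?_⟩
        rw [colsFrom, colsFrom, hAa, hLa]
        convert StripTiles.vert a h using 1
        ext R'
        simp only [Finset.mem_filter, Finset.mem_insert]
        constructor
        · rintro ⟨hR', hcol⟩
          by_cases h' : ∀ p ∈ R', c' + 1 ≤ p.2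
          · exact .inr ⟨hR', h'⟩
          · push Not at h'
            obtain ⟨p, hp, hlt⟩ := h'
            have := hcol p hp
            exact .inl (tile_unique hA hS hT hR' hR hp (p' := (a, c')) (by simp [vDom])
              (by dsimp only; omega))
        · rintro (rfl | ⟨hR', hcol⟩)
          · refine ⟨hR, fun p hp => ?_⟩
            rcases mem_vDom.1 hp with rfl | rfl <;> simp
          · exact ⟨hR', fun p hp => (Nat.le_succ _).trans (hcol p hp)⟩
      · obtain rfl : c' = c := by
          have := hfresh a c' hR
          simp only [mem_hDom, Prod.mk.injEq] at hm; omega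
        have hAa := hDom_inner hA hS hT hR
        have hLa := hDom_outer hA hS hT hR
        rcases r with - | r
        · have := hend (c' + 1) (by omega)
          omega
        obtain ⟨k, s, h⟩ := ih r (by omega) (c' + 2)
          (by
            intro a' c'' hm' h
            obtain rfl : c'' = c' + 1 := by omega
            have := tile_unique hA hS hT hR hm' (p := (a, c' + 1)) (p' := (a', c' + 1))
              (by simp [hDom]) (by simp [hDom]) rfl
            have h2 : (a, c') ∈ hDom a' (c' + 1) := by rw [← this]; simp [hDom]
            simp [mem_hDom] at h2
            omega)
          (fun j hj => hend j (by omega))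
        refine ⟨k + 1, s, ?_⟩
        rw [colsFrom, colsFrom, colsFrom, colsFrom, hAa.1, hAa.2, hLa.1, hLa.2]
        convert StripTiles.horiz a h using 1
        ext R'
        simp only [Finset.mem_filter, Finset.mem_insert]
        constructor
        · rintro ⟨hR', hcol⟩
          by_cases h' : ∀ p ∈ R', c' + 2 ≤ p.2
          · exact .inr ⟨hR', h'⟩
          · push Not at h'
            obtain ⟨p, hp, hlt⟩ := h'
            have := hcol p hp
            refine .inl (tile_unique hA hS hT hR' hR hp (p' := (a, p.2)) ?_ rfl)
            rcases (by omega : p.2 = c' ∨ p.2 = c' + 1) with h | h <;> simp [mem_hDom, h]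
        · rintro (rfl | ⟨hR', hcol⟩)
          · refine ⟨hR, fun p hp => ?_⟩
            rcases mem_hDom.1 hp with rfl | rfl <;> simp
          · exact ⟨hR', fun p hp => (Nat.le_add_right _ 2).trans (hcol p hp)⟩

end Forward

theorem colsFrom_cons_eq {f : ℕ → ℕ} {c r a : ℕ} {as : List ℕ} (h : a :: as = colsFrom f c r) :
    ∃ r', r = r' + 1 ∧ a = f c ∧ as = colsFrom f (c + 1) r' := by
  rcases r with - | r
  · simp [colsFrom] at h
  · simp only [colsFrom, List.cons.injEq] at h
    exact ⟨r, rfl, h⟩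

/-- The dominoes produced by the column description form a horizontal strip tiling of the cells
between `A` and `L` in the columns `c, …, c + r - 1`. -/
theorem StripTiles.sound {A L : ℕ → ℕ} {c as ls k s T} (h : StripTiles c as ls k s T) :
    ∀ r, as = colsFrom A c r → ls = colsFrom L c r →
      (∀ R ∈ T, IsRibbon 2 R) ∧
      ((T : Set (Finset Cell)).Pairwise fun A B => Disjoint A B) ∧
      (∀ i j, (i, j) ∈ T.biUnion id ↔ (c ≤ j ∧ j < c + r) ∧ A j ≤ i ∧ i < L j) ∧
      (∀ R ∈ T, ∀ p, TopRightCell R p → A p.2 = p.1) ∧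
      (∀ j, c ≤ j → j < c + r → A j ≤ L j) := by
  induction h with
  | nil c =>
    intro r h1 _
    rcases r with - | r
    · refine ⟨by simp, by simp, ?_, by simp, by intros; omega⟩
      intro i j
      simp only [Finset.biUnion_empty, Finset.notMem_empty, false_iff]
      omega
    · simp [colsFrom] at h1
  | @skip c as ls k s T a h ih =>
    intro r h1 h2
    obtain ⟨r, rfl, ha, h1⟩ := colsFrom_cons_eq h1
    obtain ⟨r', hr, hl, h2⟩ := colsFrom_cons_eq h2
    obtain rfl : r = r' := by omega
    obtain ⟨i1, i2, i3, i4, i5⟩ := ih r h1 h2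
    refine ⟨i1, i2, ?_, i4, ?_⟩
    · intro i j
      rw [i3]
      by_cases hj : j = c
      · subst hj; omega
      · omega
    · intro j h3 h4
      by_cases hj : j = c
      · subst hj; omega
      · exact i5 j (by omega) (by omega)
  | @vert c as ls k s T a h ih =>
    intro r h1 h2
    obtain ⟨r, rfl, ha, h1⟩ := colsFrom_cons_eq h1
    obtain ⟨r', hr, hl, h2⟩ := colsFrom_cons_eq h2
    obtain rfl : r = r' := by omega
    obtain ⟨i1, i2, i3, i4, i5⟩ := ih r h1 h2
    refine ⟨?_, ?_, ?_, ?_, ?_⟩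
    · intro R hR
      rcases Finset.mem_insert.1 hR with rfl | hR
      · exact isRibbon_vDom _ _
      · exact i1 R hR
    · rw [Finset.coe_insert, Set.pairwise_insert]
      have hd : ∀ R ∈ T, Disjoint (vDom a c) R := fun R hR =>
        Finset.disjoint_left.2 fun p hp hp' => by
          have := h.col_ge R hR p hp'
          rcases mem_vDom.1 hp with rfl | rfl <;> simp at this
      exact ⟨i2, fun R hR _ => ⟨hd R hR, (hd R hR).symm⟩⟩
    · intro i j
      rw [Finset.biUnion_insert, Finset.mem_union, i3, id, mem_vDom]
      simp only [Prod.mk.injEq]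
      by_cases hj : j = c
      · subst hj; omega
      · omega
    · intro R hR p hp
      rcases Finset.mem_insert.1 hR with rfl | hR
      · rw [topRightCell_vDom] at hp
        subst hp
        exact ha.symm
      · exact i4 R hR p hp
    · intro j h3 h4
      by_cases hj : j = c
      · subst hj; omega
      · exact i5 j (by omega) (by omega)
  | @horiz c as ls k s T a h ih =>
    intro r h1 h2
    obtain ⟨r, rfl, ha, h1⟩ := colsFrom_cons_eq h1
    obtain ⟨r', hr, hl, h2⟩ := colsFrom_cons_eq h2
    obtain rfl : r = r' := by omega
    obtain ⟨r, rfl, ha', h1⟩ := colsFrom_cons_eq h1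
    obtain ⟨r', hr, hl', h2⟩ := colsFrom_cons_eq h2
    obtain rfl : r = r' := by omega
    obtain ⟨i1, i2, i3, i4, i5⟩ := ih r h1 h2
    refine ⟨?_, ?_, ?_, ?_, ?_⟩
    · intro R hR
      rcases Finset.mem_insert.1 hR with rfl | hR
      · exact isRibbon_hDom _ _
      · exact i1 R hR
    · rw [Finset.coe_insert, Set.pairwise_insert]
      have hd : ∀ R ∈ T, Disjoint (hDom a c) R := fun R hR =>
        Finset.disjoint_left.2 fun p hp hp' => by
          have := h.col_ge R hR p hp'
          rcases mem_hDom.1 hp with rfl | rfl <;> simp at this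
      exact ⟨i2, fun R hR _ => ⟨hd R hR, (hd R hR).symm⟩⟩
    · intro i j
      rw [Finset.biUnion_insert, Finset.mem_union, i3, id, mem_hDom]
      simp only [Prod.mk.injEq]
      by_cases hj : j = c
      · subst hj; omega
      · by_cases hj' : j = c + 1
        · subst hj'; omega
        · omega
    · intro R hR p hp
      rcases Finset.mem_insert.1 hR with rfl | hR
      · rw [topRightCell_hDom] at hp
        subst hp
        exact ha'.symm
      · exact i4 R hR p hp
    · intro j h3 h4
      by_cases hj : j = c
      · subst hj; omega
      · by_cases hj' : j = c + 1
        · subst hj'; omega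
        · exact i5 j (by omega) (by omega)

theorem mem_sdiff_cells {al la : YoungDiagram} {i j : ℕ} :
    (i, j) ∈ la.cells \ al.cells ↔ al.colLen j ≤ i ∧ i < la.colLen j := by
  rw [Finset.mem_sdiff, YoungDiagram.mem_cells, YoungDiagram.mem_cells,
    YoungDiagram.mem_iff_lt_colLen, YoungDiagram.mem_iff_lt_colLen]
  omega

theorem le_iff_colLen_le {al la : YoungDiagram} : al ≤ la ↔ ∀ j, al.colLen j ≤ la.colLen j := by
  constructor
  · intro h j
    by_contra! hlt
    have := h (YoungDiagram.mem_iff_lt_colLen.2 hlt : (la.colLen j, j) ∈ al)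
    rw [YoungDiagram.mem_iff_lt_colLen] at this
    omega
  · rintro h ⟨i, j⟩ hm
    rw [YoungDiagram.mem_iff_lt_colLen] at hm ⊢
    exact hm.trans_le (h j)

/-- Column description of horizontal domino strips, for diagrams with at most `C` columns. -/
theorem strip_iff {al la : YoungDiagram} {C : ℕ} (hal : al.colLen C = 0) (hla : la.colLen C = 0)
    {T : Finset (Finset Cell)} :
    (al ≤ la ∧ IsHStripTiling 2 (la.cells \ al.cells) T) ↔
      ∃ k s, StripTiles 0 (colsFrom al.colLen 0 C) (colsFrom la.colLen 0 C) k s T := by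
  have hz : ∀ {ν : YoungDiagram}, ν.colLen C = 0 → ∀ j, C ≤ j → ν.colLen j = 0 := fun h j hj =>
    Nat.eq_zero_of_le_zero (h ▸ YoungDiagram.colLen_anti _ _ _ hj)
  constructor
  · rintro ⟨hle, hT⟩
    obtain ⟨k, s, h⟩ := exists_stripTiles (fun i j h => YoungDiagram.colLen_anti _ _ _ h)
      (le_iff_colLen_le.1 hle) (fun i j => mem_sdiff_cells) hT C 0 (by intros; omega)
      (fun j hj => by rw [hz hal j (by omega), hz hla j (by omega)])
    refine ⟨k, s, ?_⟩
    rwa [Finset.filter_true_of_mem (by intros; omega)] at h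
  · rintro ⟨k, s, h⟩
    obtain ⟨i1, i2, i3, i4, i5⟩ := h.sound C rfl rfl
    have hS : T.biUnion id = la.cells \ al.cells := by
      ext ⟨i, j⟩
      rw [i3, mem_sdiff_cells]
      have := hz hla j
      omega
    refine ⟨le_iff_colLen_le.2 fun j => ?_, ⟨i1, i2, hS⟩, ?_⟩
    · by_cases hj : j < C
      · exact i5 j (by omega) (by omega)
      · rw [hz hal j (by omega)]; exact Nat.zero_le _
    · intro R hR p hp
      have := i4 R hR p hp
      rw [mem_sdiff_cells]
      omega

/-! ### Removing dominoes from strips -/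

/-- The horizontal domino strips `la/mu`, recorded by their tiling. -/
abbrev HStrip (mu la : YoungDiagram) : Type :=
  {T : Finset (Finset Cell) // mu ≤ la ∧ IsHStripTiling 2 (la.cells \ mu.cells) T}

theorem colLen_eq_zero_iff {mu : YoungDiagram} {j : ℕ} : mu.colLen j = 0 ↔ mu.rowLen 0 ≤ j := by
  have h : (0, j) ∈ mu ↔ 0 < mu.colLen j := YoungDiagram.mem_iff_lt_colLen
  rw [YoungDiagram.mem_iff_lt_rowLen] at h
  omega

/-- A skew shape has at most one tiling that makes it a horizontal domino strip. -/
instance (mu la : YoungDiagram) : Subsingleton (HStrip mu la) := by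
  constructor
  rintro ⟨T, hT⟩ ⟨T', hT'⟩
  have h1 : mu.colLen (max (mu.rowLen 0) (la.rowLen 0)) = 0 :=
    colLen_eq_zero_iff.2 (le_max_left _ _)
  have h2 : la.colLen (max (mu.rowLen 0) (la.rowLen 0)) = 0 :=
    colLen_eq_zero_iff.2 (le_max_right _ _)
  obtain ⟨k, s, h⟩ := (strip_iff h1 h2).1 hT
  obtain ⟨k', s', h'⟩ := (strip_iff h1 h2).1 hT'
  exact Subtype.ext (h.unique h')

theorem card_of_tiling {mu la : YoungDiagram} (hle : mu ≤ la) {T : Finset (Finset Cell)}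
    (hT : IsTilingOf 2 (la.cells \ mu.cells) T) : la.card = mu.card + 2 * T.card := by
  have h1 : (la.cells \ mu.cells).card = 2 * T.card := by
    rw [← hT.2.2, Finset.card_biUnion (t := id) (fun A hA B hB hne => hT.2.1 hA hB hne),
      Finset.sum_congr (g := fun _ => 2) rfl (fun R hR => by rw [id, (hT.1 R hR).1])]
    simp [mul_comm]
  have h2 := Finset.card_sdiff_add_card_eq_card (YoungDiagram.cells_subset_iff.2 hle)
  rw [h1] at h2
  simp only [YoungDiagram.card]
  omega

theorem HStrip.card_eq {mu la : YoungDiagram} (T : HStrip mu la) :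
    la.card = mu.card + 2 * T.1.card :=
  card_of_tiling T.2.1 T.2.2.1

theorem HStrip.eq_of_empty {mu la : YoungDiagram} (T : HStrip mu la) (h : T.1 = ∅) : la = mu := by
  obtain ⟨T, hle, hT⟩ := T
  subst h
  have h := hT.1.2.2
  simp only [Finset.biUnion_empty] at h
  refine le_antisymm ?_ hle
  exact YoungDiagram.cells_subset_iff.1 (Finset.sdiff_eq_empty_iff_subset.1 h.symm)

/-- The rightmost domino of a nonempty horizontal strip is removable, and removing it leaves a
horizontal strip. -/
theorem HStrip.exists_remove {mu la : YoungDiagram} (T : HStrip mu la) (h : T.1.Nonempty) :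
    ∃ nu : YoungDiagram, RibbonStep 2 la nu ∧ ∃ T' : HStrip mu nu, T'.1.card < T.1.card := by
  obtain ⟨T, hle, hT⟩ := T
  dsimp only at h ⊢
  have hA : Antitone mu.colLen := fun i j h => YoungDiagram.colLen_anti _ _ _ h
  have hS : ∀ i j, (i, j) ∈ la.cells \ mu.cells ↔ mu.colLen j ≤ i ∧ i < la.colLen j :=
    fun i j => mem_sdiff_cells
  -- a cell `z` of the strip in its last column, and the domino `R` covering it
  obtain ⟨R₀, hR₀⟩ := h
  have hne : (la.cells \ mu.cells).Nonempty := by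
    obtain ⟨p, hp⟩ : R₀.Nonempty := by
      rw [← Finset.card_pos, (hT.1.1 R₀ hR₀).1]; norm_num
    exact ⟨p, tile_subset hT hR₀ hp⟩
  obtain ⟨z, hz, hmax⟩ := Finset.exists_max_image _ Prod.snd hne
  have hz' := hz
  rw [← hT.1.2.2] at hz'
  obtain ⟨R, hR, hzR⟩ := Finset.mem_biUnion.1 hz'
  simp only [id] at hzR
  have hcols : ∀ p ∈ R, ∀ j, p.2 ≤ j → j ≤ z.2 → ∃ q ∈ R, q.2 = j := by
    intro p hp j h1 h2
    have h3 : j = p.2 ∨ j = z.2 := by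
      obtain ⟨a, c, rfl | rfl⟩ := eq_dom_of_isRibbon (hT.1.1 R hR)
      · rcases mem_vDom.1 hp with rfl | rfl <;> rcases mem_vDom.1 hzR with rfl | rfl <;>
          dsimp only at * <;> omega
      · rcases mem_hDom.1 hp with rfl | rfl <;> rcases mem_hDom.1 hzR with rfl | rfl <;>
          dsimp only at * <;> omega
    rcases h3 with rfl | rfl
    · exact ⟨p, hp, rfl⟩
    · exact ⟨z, hzR, rfl⟩
  have hRS : R ⊆ la.cells \ mu.cells := fun p hp => tile_subset hT hR hp
  let nu : YoungDiagram :=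
    { cells := la.cells \ R
      isLowerSet := by
        rintro q p hpq hq
        simp only [Finset.coe_sdiff, Set.mem_sdiff, Finset.mem_coe] at hq ⊢
        refine ⟨la.isLowerSet hpq hq.1, fun hpR => hq.2 ?_⟩
        have h1 := (hS p.1 p.2).1 (hRS hpR)
        have h2 := hA hpq.2
        have h3 := hpq.1
        have hqla : q ∈ la := hq.1
        have h4 : q.1 < la.colLen q.2 := YoungDiagram.mem_iff_lt_colLen.1 hqla
        have hqS : (q.1, q.2) ∈ la.cells \ mu.cells := (hS _ _).2 ⟨by omega, h4⟩
        obtain ⟨q', hq', he⟩ := hcols p hpR q.2 hpq.2 (hmax _ hqS)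
        have := mem_tile_of_mem hA hS hT hR hq' (i := q.1) (by rw [he]; exact hqS)
        rwa [he] at this }
  have hnu : nu.cells = la.cells \ R := rfl
  have hsub : nu ≤ la := by
    rw [← YoungDiagram.cells_subset_iff, hnu]; exact Finset.sdiff_subset
  have hRla : R ⊆ la.cells := hRS.trans Finset.sdiff_subset
  have hmunu : mu ≤ nu := by
    rw [← YoungDiagram.cells_subset_iff, hnu, Finset.subset_sdiff]
    refine ⟨YoungDiagram.cells_subset_iff.2 hle, Finset.disjoint_left.2 fun p hp hpR => ?_⟩
    exact (Finset.mem_sdiff.1 (hRS hpR)).2 hp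
  have hcells : nu.cells \ mu.cells = (la.cells \ mu.cells) \ R := by
    rw [hnu, sdiff_right_comm]
  have herase : (T.erase R).biUnion id = nu.cells \ mu.cells := by
    rw [hcells]
    ext p
    rw [← hT.1.2.2]
    simp only [Finset.mem_biUnion, Finset.mem_erase, Finset.mem_sdiff, id]
    constructor
    · rintro ⟨R', ⟨hne', hR'⟩, hp⟩
      exact ⟨⟨R', hR', hp⟩, fun hpR =>
        Finset.disjoint_left.1 (hT.1.2.1 hR' hR hne') hp hpR⟩
    · rintro ⟨⟨R', hR', hp⟩, hpR⟩
      exact ⟨R', ⟨fun he => hpR (he ▸ hp), hR'⟩, hp⟩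
  refine ⟨nu, ⟨hsub, ?_⟩, ⟨T.erase R, hmunu, ⟨?_, ?_, herase⟩, ?_⟩, Finset.card_erase_lt_of_mem hR⟩
  · rw [hnu, Finset.sdiff_sdiff_eq_self hRla]
    exact hT.1.1 R hR
  · exact fun R' hR' => hT.1.1 R' (Finset.mem_of_mem_erase hR')
  · exact hT.1.2.1.mono (by simp)
  · intro R' hR' c hc
    refine (hT.2 R' (Finset.mem_of_mem_erase hR') c hc).imp id fun h h' => h ?_
    rw [hcells] at h'
    exact (Finset.mem_sdiff.1 h').1

theorem HStrip.reflTransGen {mu : YoungDiagram} (n : ℕ) :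
    ∀ {la : YoungDiagram} (T : HStrip mu la), T.1.card = n →
      Relation.ReflTransGen (RibbonStep 2) la mu := by
  induction n using Nat.strong_induction_on with
  | _ n ih =>
  intro la T hn
  rcases T.1.eq_empty_or_nonempty with h | h
  · rw [T.eq_of_empty h]
  · obtain ⟨nu, hstep, T', hlt⟩ := T.exists_remove h
    exact .head hstep (ih _ (hn ▸ hlt) T' rfl)

theorem HStrip.empty_of_core {de mu : YoungDiagram} (hde : ∀ nu, ¬ RibbonStep 2 de nu)
    (T : HStrip mu de) : T.1 = ∅ := by
  by_contra h
  obtain ⟨nu, hstep, -⟩ := T.exists_remove (Finset.nonempty_iff_ne_empty.2 h)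
  exact hde nu hstep

/-- The empty strip. -/
def HStrip.refl (mu : YoungDiagram) : HStrip mu mu :=
  ⟨∅, le_rfl, by simp [IsHStripTiling, IsTilingOf, NorthernCond]⟩

/-! ### Comparing coefficients -/

section Counting

open Polynomial

/-- Both outcomes of `run` are strips, the first one has `k` dominoes, and the two spins add up to
`s`. -/
def Stat (o o' : Option (ℕ × ℕ)) (k s : ℕ) : Prop :=
  ∃ p p', o = some p ∧ o' = some p' ∧ p.1 = k ∧ p.2 + p'.2 = s

theorem coeff_monomials (k s k' s' : ℕ) :
    (((X : ℤ[X][X]) ^ k * (C X : ℤ[X][X]) ^ s).coeff k').coeff s' =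
      if k = k' ∧ s = s' then 1 else 0 := by
  rw [mul_comm, ← C_pow, coeff_C_mul_X_pow]
  by_cases hk : k = k'
  · subst hk
    rw [if_pos rfl, coeff_X_pow]
    simp [eq_comm]
  · rw [if_neg (Ne.symm hk)]
    simp [hk]

theorem coeff_runWt (o o' : Option (ℕ × ℕ)) (k s k' s' : ℕ) :
    ((runWt (X : ℤ[X][X]) (C X) o * runWt 1 (C X : ℤ[X][X]) o' * (X ^ k * (C X) ^ s)).coeff k').coeff s' =
      if ∃ k₀ s₀, Stat o o' k₀ s₀ ∧ k₀ + k = k' ∧ s₀ + s = s' then 1 else 0 := by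
  obtain _ | p := o
  · simp [runWt, Stat]
  obtain _ | p' := o'
  · simp [runWt, Stat]
  have : runWt (X : ℤ[X][X]) (C X) (some p) * runWt 1 (C X : ℤ[X][X]) (some p') * (X ^ k * (C X) ^ s) =
      X ^ (p.1 + k) * (C X) ^ (p.2 + p'.2 + s) := by
    simp only [runWt, Option.elim_some, one_pow, one_mul]
    ring
  rw [this, coeff_monomials]
  refine if_congr ?_ rfl rfl
  constructor
  · rintro ⟨h1, h2⟩
    exact ⟨p.1, p.2 + p'.2, ⟨p, p', rfl, rfl, rfl, rfl⟩, h1, h2⟩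
  · rintro ⟨k₀, s₀, ⟨_, _, ⟨⟩, ⟨⟩, rfl, rfl⟩, h1, h2⟩
    exact ⟨h1, h2⟩

/-- Multiplying by truncated geometric series inverts `(1 - x)(1 - q²x)` modulo `x ^ r`. -/
theorem dvd_geom {A : Type*} [CommRing A] (x y g l : A) (r : ℕ) (hy : x ^ r ∣ y ^ r)
    (h : x ^ r ∣ g - (1 - x) * (1 - y) * l) :
    x ^ r ∣ (∑ i ∈ Finset.range r, x ^ i) * (∑ i ∈ Finset.range r, y ^ i) * g - l := by
  have h1 := mul_neg_geom_sum x r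
  have h2 := mul_neg_geom_sum y r
  obtain ⟨d, hd⟩ := h
  obtain ⟨e, he⟩ := hy
  have hg : g = (1 - x) * (1 - y) * l + x ^ r * d := by rw [← hd]; ring
  refine ⟨(∑ i ∈ Finset.range r, x ^ i) * (∑ i ∈ Finset.range r, y ^ i) * d - l
    - e * l + x ^ r * e * l, ?_⟩
  rw [hg]
  calc _ = ((1 - x) * ∑ i ∈ Finset.range r, x ^ i) * ((1 - y) * ∑ i ∈ Finset.range r, y ^ i) * l
        + (∑ i ∈ Finset.range r, x ^ i) * (∑ i ∈ Finset.range r, y ^ i) * (x ^ r * d) - l := by ring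
    _ = _ := by rw [h1, h2, he]; ring

/-- The counting form of the local rule, on boundary words. -/
theorem word_count (r : ℕ) (α β : List Bool) (hlen : α.length = β.length) (k s : ℕ) (hk : k < r)
    (wα wβ : List Bool) (hα : wα = true :: true :: α ++ List.replicate (2 * r) false)
    (hβ : wβ = true :: true :: β ++ List.replicate (2 * r) false) :
    ((words wα.length).filter fun w =>
        Stat (run false false wα w) (run false false wβ w) k s).card =
      ((words wα.length ×ˢ (Finset.range r ×ˢ Finset.range r)).filter fun z =>
        ∃ k₀ s₀, Stat (run false false z.1 wβ) (run false false z.1 wα) k₀ s₀ ∧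
          k₀ + (z.2.1 + z.2.2) = k ∧ s₀ + 2 * z.2.2 = s).card := by
  have hl : wα.length = wβ.length := by simp [hα, hβ, hlen]
  have key := up_down_congr (X : ℤ[X][X]) (C X) r α β hlen
  rw [← hα, ← hβ, ← sum_up _ _ _ _ hl, ← sum_down _ _ _ _ hl] at key
  have key2 := dvd_geom _ ((C X : ℤ[X][X]) ^ 2 * X) _ _ r
    (by rw [mul_pow]; exact dvd_mul_left _ _) key
  rw [X_pow_dvd_iff] at key2
  have key3 := congrArg (fun P => P.coeff s) (key2 k hk)
  simp only [coeff_sub, coeff_zero, sub_eq_zero] at key3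
  have hL : ((∑ w ∈ words wα.length, runWt (X : ℤ[X][X]) (C X) (run false false wα w) *
      runWt 1 (C X : ℤ[X][X]) (run false false wβ w)).coeff k).coeff s =
      ((words wα.length).filter fun w =>
        Stat (run false false wα w) (run false false wβ w) k s).card := by
    rw [Finset.natCast_card_filter, finsetSum_coeff, finsetSum_coeff]
    refine Finset.sum_congr rfl fun w _ => ?_
    have := coeff_runWt (run false false wα w) (run false false wβ w) 0 0 k s
    simp only [pow_zero, mul_one] at this
    rw [this]
    refine if_congr ?_ rfl rfl
    simp
  have hR : (((∑ i ∈ Finset.range r, (X : ℤ[X][X]) ^ i) *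
      (∑ i ∈ Finset.range r, ((C X : ℤ[X][X]) ^ 2 * X) ^ i) *
      ∑ w ∈ words wα.length, runWt 1 (C X : ℤ[X][X]) (run false false w wα) *
      runWt (X : ℤ[X][X]) (C X) (run false false w wβ)).coeff k).coeff s =
      ((words wα.length ×ˢ (Finset.range r ×ˢ Finset.range r)).filter fun z =>
        ∃ k₀ s₀, Stat (run false false z.1 wβ) (run false false z.1 wα) k₀ s₀ ∧
          k₀ + (z.2.1 + z.2.2) = k ∧ s₀ + 2 * z.2.2 = s).card := by
    rw [Finset.natCast_card_filter, Finset.sum_mul_sum, mul_comm, ← Finset.sum_product',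
      Finset.sum_mul_sum, ← Finset.sum_product', finsetSum_coeff, finsetSum_coeff]
    refine Finset.sum_congr rfl fun z _ => ?_
    rw [← coeff_runWt]
    refine congrArg (fun P : ℤ[X][X] => (P.coeff k).coeff s) ?_
    generalize runWt (1 : ℤ[X][X]) _ _ = u
    generalize runWt (X : ℤ[X][X]) _ _ = v
    ring
  exact_mod_cast hL.symm.trans (key3.symm.trans hR)

end Counting

/-! ### Boundary words of Young diagrams -/

/-- The boundary word with `K` row steps whose column steps see the heights in the given list. -/
def wd : ℕ → List ℕ → List Bool
  | K, [] => List.replicate K true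
  | K, h :: t => List.replicate (K - h) true ++ false :: wd h t

theorem wd_succ {K : ℕ} {l : List ℕ} (h : ∀ x ∈ l, x ≤ K) : wd (K + 1) l = true :: wd K l := by
  cases l with
  | nil => simp [wd, List.replicate_succ]
  | cons a t =>
    have := h a (by simp)
    rw [wd, wd, Nat.succ_sub this, List.replicate_succ, List.cons_append]

theorem wd_cols (w : List Bool) : wd (w.count true) (cols w) = w := by
  induction w with
  | nil => rfl
  | cons a w ih =>
    cases a
    · simp [cols, wd, ih]
    · simp only [cols, List.count_cons_self]
      rw [wd_succ (fun x hx => le_of_mem_cols hx), ih]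

theorem cols_length (w : List Bool) : (cols w).length + w.count true = w.length := by
  induction w with
  | nil => rfl
  | cons a w ih => cases a <;> simp [cols] <;> omega

theorem cols_pairwise (w : List Bool) : (cols w).Pairwise (· ≥ ·) := by
  induction w with
  | nil => simp [cols]
  | cons a w ih =>
    cases a
    · exact List.pairwise_cons.2 ⟨fun x hx => le_of_mem_cols hx, ih⟩
    · exact ih

theorem wd_spec (l : List ℕ) : ∀ K, (K :: l).Pairwise (· ≥ ·) →
    cols (wd K l) = l ∧ (wd K l).count true = K ∧ (wd K l).length = K + l.length := by
  have hrep : ∀ m w, cols (List.replicate m true ++ w) = cols w := by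
    intro m w
    induction m with
    | zero => rfl
    | succ m ih => rw [List.replicate_succ, List.cons_append, cols, ih]
  induction l with
  | nil =>
    intro K _
    have := hrep K []
    simp only [List.append_nil] at this
    simp [wd, this, cols]
  | cons h t ih =>
    intro K hK
    rw [List.pairwise_cons] at hK
    obtain ⟨h1, h2, h3⟩ := ih h hK.2
    have := hK.1 h (by simp)
    refine ⟨?_, ?_, ?_⟩
    · rw [wd, hrep, cols, h1, h2]
    · simp [wd, h2]; omega
    · simp [wd, h3]; omega

theorem wd_append_zeros (l : List ℕ) (m : ℕ) : ∀ K,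
    wd K (l ++ List.replicate m 0) = wd K l ++ List.replicate m false := by
  induction l with
  | nil =>
    induction m with
    | zero => simp
    | succ m ih =>
      intro K
      have h0 := ih 0
      simp only [List.nil_append] at h0 ⊢
      simp [List.replicate_succ, wd, h0]
  | cons h t ih =>
    intro K
    rw [List.cons_append, wd, ih, wd, List.append_assoc, List.cons_append]

theorem colsFrom_eq (f : ℕ → ℕ) (r : ℕ) : ∀ c, colsFrom f c r = (List.range' c r).map f := by
  induction r with
  | zero => intro c; rfl
  | succ r ih => intro c; rw [colsFrom, ih, List.range'_succ, List.map_cons]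

theorem colsFrom_append_zeros {f : ℕ → ℕ} {C : ℕ} (m : ℕ) (h : ∀ j, C ≤ j → f j = 0) :
    colsFrom f 0 (C + m) = colsFrom f 0 C ++ List.replicate m 0 := by
  rw [colsFrom_eq, colsFrom_eq, ← List.range'_append_1, List.map_append]
  congr 1
  rw [List.eq_replicate_iff]
  simp only [List.length_map, List.length_range', List.mem_map, List.mem_range'_1, true_and]
  rintro _ ⟨j, hj, rfl⟩
  exact h j (by omega)

/-- The boundary word of a diagram inside a box with `K` rows and `C` columns. -/
def bw (K C : ℕ) (la : YoungDiagram) : List Bool := wd K (colsFrom la.colLen 0 C)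

/-- The diagram fits in a box with `K` rows and `C` columns. -/
def InBox (K C : ℕ) (la : YoungDiagram) : Prop := la.colLen 0 ≤ K ∧ la.colLen C = 0

theorem InBox.zero {K C : ℕ} {la : YoungDiagram} (h : InBox K C la) {j : ℕ} (hj : C ≤ j) :
    la.colLen j = 0 :=
  Nat.eq_zero_of_le_zero (h.2 ▸ YoungDiagram.colLen_anti _ _ _ hj)

theorem InBox.mono {K C K' C' : ℕ} {la : YoungDiagram} (h : InBox K C la) (hK : K ≤ K')
    (hC : C ≤ C') : InBox K' C' la :=
  ⟨h.1.trans hK, h.zero hC⟩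

theorem InBox.of_le {K C : ℕ} {mu la : YoungDiagram} (h : InBox K C la) (hle : mu ≤ la) :
    InBox K C mu := by
  have := le_iff_colLen_le.1 hle
  exact ⟨(this 0).trans h.1, Nat.eq_zero_of_le_zero (h.2 ▸ this C)⟩

theorem InBox.pairwise {K C : ℕ} {la : YoungDiagram} (h : InBox K C la) :
    (K :: colsFrom la.colLen 0 C).Pairwise (· ≥ ·) := by
  rw [colsFrom_eq, List.pairwise_cons, List.pairwise_map]
  constructor
  · simp only [List.mem_map]
    rintro _ ⟨j, -, rfl⟩
    exact (YoungDiagram.colLen_anti _ _ _ (Nat.zero_le j)).trans h.1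
  · refine List.Pairwise.imp ?_ (List.pairwise_lt_range' (s := 0) (n := C))
    intro i j hij
    exact YoungDiagram.colLen_anti _ _ _ hij.le

theorem InBox.length_bw {K C : ℕ} {la : YoungDiagram} (h : InBox K C la) :
    (bw K C la).length = K + C := by
  rw [bw, (wd_spec _ _ h.pairwise).2.2, colsFrom_eq]; simp

theorem InBox.count_bw {K C : ℕ} {la : YoungDiagram} (h : InBox K C la) :
    (bw K C la).count true = K := (wd_spec _ _ h.pairwise).2.1

theorem InBox.cols_bw {K C : ℕ} {la : YoungDiagram} (h : InBox K C la) :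
    cols (bw K C la) = colsFrom la.colLen 0 C := (wd_spec _ _ h.pairwise).1

theorem bw_inj {K C : ℕ} {la mu : YoungDiagram} (hl : InBox K C la) (hm : InBox K C mu)
    (h : bw K C la = bw K C mu) : la = mu := by
  have h1 := hl.cols_bw
  rw [h, hm.cols_bw, colsFrom_eq, colsFrom_eq, List.map_inj_left] at h1
  have h2 : ∀ j, mu.colLen j = la.colLen j := by
    intro j
    by_cases hj : j < C
    · exact h1 j (by simp [List.mem_range'_1, hj])
    · rw [hl.zero (by omega), hm.zero (by omega)]
  exact le_antisymm (le_iff_colLen_le.2 fun j => (h2 j).ge) (le_iff_colLen_le.2 fun j => (h2 j).le)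

theorem colLen_ydOf {n : ℕ} {f : ℕ → ℕ} {hf : Antitone f} (j : ℕ) :
    (ydOf n f hf).colLen j = if j < n then f j else 0 := by
  have h : ∀ i, i < (ydOf n f hf).colLen j ↔ j < n ∧ i < f j := fun i => by
    rw [← YoungDiagram.mem_iff_lt_colLen, mem_ydOf]
  have h1 := h (f j)
  have h2 := h ((ydOf n f hf).colLen j)
  have h3 := h 0
  split_ifs <;> omega

theorem bw_surj {K C : ℕ} {w : List Bool} (hlen : w.length = K + C) (hc : w.count true = K) :
    ∃ la, InBox K C la ∧ bw K C la = w := by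
  have hn : (cols w).length = C := by have := cols_length w; omega
  have hf : Antitone fun j => (cols w).getD j 0 := by
    intro i j hij
    dsimp only
    by_cases hj : j < (cols w).length
    · rw [List.getD_eq_getElem _ _ hj, List.getD_eq_getElem _ _ (by omega)]
      rcases hij.eq_or_lt with rfl | hij
      · exact le_rfl
      · exact List.pairwise_iff_getElem.1 (cols_pairwise w) i j _ hj hij
    · rw [List.getD_eq_default _ _ (by omega)]; exact Nat.zero_le _
  refine ⟨ydOf C _ hf, ⟨?_, ?_⟩, ?_⟩
  · rw [colLen_ydOf]
    split_ifs with h0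
    · rw [List.getD_eq_getElem _ _ (by omega), ← hc]
      exact le_of_mem_cols (List.getElem_mem _)
    · exact Nat.zero_le _
  · rw [colLen_ydOf, if_neg (lt_irrefl _)]
  · have : colsFrom (ydOf C _ hf).colLen 0 C = cols w := by
      rw [colsFrom_eq]
      refine List.ext_getElem (by simp [hn]) fun j h1 h2 => ?_
      rw [hn] at h2
      simp only [List.getElem_map, List.getElem_range', colLen_ydOf, one_mul, zero_add, if_pos h2]
      rw [List.getD_eq_getElem]
    rw [bw, this, ← hc, wd_cols]

/-- On boundary words, the automaton `run` recognizes horizontal domino strips. -/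
theorem run_bw {K C : ℕ} {mu la : YoungDiagram} (hm : InBox K C mu) (hl : InBox K C la)
    {k s : ℕ} : run false false (bw K C mu) (bw K C la) = some (k, s) ↔
      ∃ T : HStrip mu la, T.1.card = k ∧ tilingSpin T.1 = s := by
  rw [run_iff_colStrip (by rw [hm.length_bw, hl.length_bw]) (by rw [hm.count_bw, hl.count_bw]),
    hm.cols_bw, hl.cols_bw]
  constructor
  · intro h
    obtain ⟨T, hT⟩ := h.exists_tiles 0
    exact ⟨⟨T, (strip_iff hm.2 hl.2).2 ⟨k, s, hT⟩⟩, hT.card_eq, hT.spin_eq⟩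
  · rintro ⟨T, rfl, rfl⟩
    obtain ⟨k, s, hT⟩ := (strip_iff hm.2 hl.2).1 T.2
    have := hT.colStrip
    rwa [← hT.card_eq, ← hT.spin_eq] at this

theorem bw_padded {K C m : ℕ} {la : YoungDiagram} (h : InBox K C la) :
    bw (K + 2) (C + m) la = true :: true :: bw K C la ++ List.replicate m false := by
  have hle : ∀ x ∈ colsFrom la.colLen 0 (C + m), x ≤ K :=
    (List.pairwise_cons.1 (h.mono le_rfl (Nat.le_add_right C m)).pairwise).1
  rw [bw, wd_succ (fun x hx => (hle x hx).trans (Nat.le_succ K)), wd_succ hle,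
    colsFrom_append_zeros m fun j hj => h.zero hj, wd_append_zeros]
  rfl

theorem InBox.of_strip {K C : ℕ} {mu la : YoungDiagram} (h : InBox K C mu) (T : HStrip mu la) :
    InBox (K + 2) (C + 2 * T.1.card) la := by
  constructor
  · have h1 : mu.colLen (mu.rowLen 0 + la.rowLen 0 + 1) = 0 := colLen_eq_zero_iff.2 (by omega)
    have h2 : la.colLen (mu.rowLen 0 + la.rowLen 0 + 1) = 0 := colLen_eq_zero_iff.2 (by omega)
    obtain ⟨k, s, hT⟩ := (strip_iff h1 h2).1 T.2
    have h3 := h.1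
    have h4 : la.colLen 0 ≤ mu.colLen 0 + 2 := by
      have hT := hT.colStrip
      rw [colsFrom, colsFrom] at hT
      generalize hs : colsFrom mu.colLen (0 + 1) _ = as at hT
      generalize hs' : colsFrom la.colLen (0 + 1) _ = ls at hT
      generalize mu.colLen 0 = x at hT ⊢
      generalize la.colLen 0 = y at hT ⊢
      cases hT <;> omega
    omega
  · rw [colLen_eq_zero_iff]
    have h1 := colLen_eq_zero_iff.1 h.2
    have h2 : (la.cells \ mu.cells).card = 2 * T.1.card := by
      have h3 := T.card_eq
      have h4 := Finset.card_sdiff_add_card_eq_card (YoungDiagram.cells_subset_iff.2 T.2.1)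
      simp only [YoungDiagram.card] at h3
      omega
    have h5 : (Finset.Ico (mu.rowLen 0) (la.rowLen 0)).card ≤ (la.cells \ mu.cells).card := by
      refine Finset.card_le_card_of_injOn (fun j => ((0, j) : Cell)) ?_ (by
        intro i _ j _ h; simpa using h)
      intro j hj
      simp only [Finset.coe_Ico, Set.mem_Ico] at hj
      simp only [Finset.mem_coe, Finset.mem_sdiff, YoungDiagram.mem_cells,
        YoungDiagram.mem_iff_lt_rowLen]
      omega
    rw [Nat.card_Ico] at h5
    omega

/-! ### The local rule -/

/-- Common upper ends `la` of horizontal strips starting at `al` and at `be`. -/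
abbrev Upper (al be : YoungDiagram) : Type := Σ la : YoungDiagram, HStrip al la × HStrip be la

/-- Common lower ends `mu` of horizontal strips ending at `al` and at `be`. -/
abbrev Lower (al be : YoungDiagram) : Type := Σ mu : YoungDiagram, HStrip mu al × HStrip mu be

theorem Upper.ext {al be : YoungDiagram} {z z' : Upper al be} (h : z.1 = z'.1) : z = z' := by
  obtain ⟨la, z⟩ := z
  obtain ⟨la', z'⟩ := z'
  obtain rfl : la = la' := h
  rw [Subsingleton.elim z z']

theorem Lower.ext {al be : YoungDiagram} {z z' : Lower al be} (h : z.1 = z'.1) : z = z' := by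
  obtain ⟨la, z⟩ := z
  obtain ⟨la', z'⟩ := z'
  obtain rfl : la = la' := h
  rw [Subsingleton.elim z z']

theorem stat_bw {K C : ℕ} {al be al' be' : YoungDiagram} (h1 : InBox K C al) (h2 : InBox K C be)
    (h1' : InBox K C al') (h2' : InBox K C be') {k s : ℕ} :
    Stat (run false false (bw K C al) (bw K C al')) (run false false (bw K C be) (bw K C be')) k s ↔
      ∃ (T : HStrip al al') (T' : HStrip be be'), T.1.card = k ∧
        tilingSpin T.1 + tilingSpin T'.1 = s := by
  constructor
  · rintro ⟨⟨k, s⟩, ⟨k', s'⟩, hp, hp', rfl, rfl⟩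
    obtain ⟨T, rfl, rfl⟩ := (run_bw h1 h1').1 hp
    obtain ⟨T', rfl, rfl⟩ := (run_bw h2 h2').1 hp'
    exact ⟨T, T', rfl, rfl⟩
  · rintro ⟨T, T', rfl, rfl⟩
    exact ⟨_, _, (run_bw h1 h1').2 ⟨T, rfl, rfl⟩, (run_bw h2 h2').2 ⟨T', rfl, rfl⟩, rfl, rfl⟩

/-- The pairs of upper strips with prescribed size and spin are equinumerous with the pairs of
lower strips decorated by two integers. -/
theorem fiber_equiv (al be : YoungDiagram) (k s : ℕ) :
    Nonempty ({z : Upper al be // (z.2.1.1.card, tilingSpin z.2.1.1 + tilingSpin z.2.2.1) = (k, s)} ≃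
      {z : Lower al be × (ℕ × ℕ) // (z.1.2.2.1.card + (z.2.1 + z.2.2),
        tilingSpin z.1.2.2.1 + tilingSpin z.1.2.1.1 + 2 * z.2.2) = (k, s)}) := by
  obtain ⟨K, C, hα₀, hβ₀⟩ : ∃ K C, InBox K C al ∧ InBox K C be :=
    ⟨max (al.colLen 0) (be.colLen 0), max (al.rowLen 0) (be.rowLen 0),
      ⟨le_max_left _ _, colLen_eq_zero_iff.2 (le_max_left _ _)⟩,
      ⟨le_max_right _ _, colLen_eq_zero_iff.2 (le_max_right _ _)⟩⟩
  have hα : InBox (K + 2) (C + 2 * (k + 1)) al := hα₀.mono (by omega) (by omega)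
  have hβ : InBox (K + 2) (C + 2 * (k + 1)) be := hβ₀.mono (by omega) (by omega)
  have hcard := word_count (k + 1) (bw K C al) (bw K C be)
    (by rw [hα₀.length_bw, hβ₀.length_bw]) k s (Nat.lt_succ_self k) _ _
    (bw_padded hα₀) (bw_padded hβ₀)
  have hboxU : ∀ la (T : HStrip al la), T.1.card = k → InBox (K + 2) (C + 2 * (k + 1)) la :=
    fun la T hT => (hα₀.of_strip T).mono le_rfl (by omega)
  have hboxL : ∀ mu (T : HStrip mu al), InBox (K + 2) (C + 2 * (k + 1)) mu :=
    fun mu T => hα.of_le T.2.1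
  rw [hα.length_bw] at hcard
  have hmU : ∀ z : {z : Upper al be //
      (z.2.1.1.card, tilingSpin z.2.1.1 + tilingSpin z.2.2.1) = (k, s)},
      bw (K + 2) (C + 2 * (k + 1)) z.1.1 ∈
        (words (K + 2 + (C + 2 * (k + 1)))).filter fun w =>
          Stat (run false false (bw (K + 2) (C + 2 * (k + 1)) al) w)
            (run false false (bw (K + 2) (C + 2 * (k + 1)) be) w) k s := by
    rintro ⟨⟨la, T, T'⟩, hz⟩
    simp only [Prod.mk.injEq] at hz
    have hla := hboxU la T hz.1
    rw [Finset.mem_filter, mem_words, hla.length_bw]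
    exact ⟨rfl, (stat_bw hα hβ hla hla).2 ⟨T, T', hz⟩⟩
  have hmL : ∀ z : {z : Lower al be × (ℕ × ℕ) // (z.1.2.2.1.card + (z.2.1 + z.2.2),
        tilingSpin z.1.2.2.1 + tilingSpin z.1.2.1.1 + 2 * z.2.2) = (k, s)},
      (bw (K + 2) (C + 2 * (k + 1)) z.1.1.1, z.1.2) ∈
        (words (K + 2 + (C + 2 * (k + 1))) ×ˢ
          (Finset.range (k + 1) ×ˢ Finset.range (k + 1))).filter fun z =>
        ∃ k₀ s₀, Stat (run false false z.1 (bw (K + 2) (C + 2 * (k + 1)) be))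
            (run false false z.1 (bw (K + 2) (C + 2 * (k + 1)) al)) k₀ s₀ ∧
          k₀ + (z.2.1 + z.2.2) = k ∧ s₀ + 2 * z.2.2 = s := by
    rintro ⟨⟨⟨mu, T, T'⟩, a, b⟩, hz⟩
    simp only [Prod.mk.injEq] at hz
    have hmu := hboxL mu T
    simp only [Finset.mem_filter, Finset.mem_product, mem_words, hmu.length_bw, Finset.mem_range]
    exact ⟨⟨trivial, by omega, by omega⟩, _, _, (stat_bw hmu hmu hβ hα).2 ⟨T', T, rfl, rfl⟩, hz⟩
  refine ⟨((Equiv.ofBijective (fun z => ⟨_, hmU z⟩) ⟨?_, ?_⟩).trans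
    (Finset.equivOfCardEq hcard)).trans
    (Equiv.ofBijective (fun z => ⟨_, hmL z⟩) ⟨?_, ?_⟩).symm⟩
  · rintro ⟨⟨la, T, T'⟩, hz⟩ ⟨⟨la', T₁, T₁'⟩, hz'⟩ h
    simp only [Prod.mk.injEq] at hz hz'
    refine Subtype.ext (Upper.ext ?_)
    exact bw_inj (hboxU la T hz.1) (hboxU la' T₁ hz'.1) (Subtype.ext_iff.1 h)
  · rintro ⟨w, hw⟩
    rw [Finset.mem_filter, mem_words] at hw
    have hst := hw.2
    obtain ⟨p, p', hp, -⟩ := hw.2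
    have hc := count_of_run _ _ _ _ _ hp
    rw [hα.count_bw] at hc
    obtain ⟨la, hla, rfl⟩ := bw_surj hw.1 hc
    obtain ⟨T, T', h⟩ := (stat_bw hα hβ hla hla).1 hst
    exact ⟨⟨⟨la, T, T'⟩, by simp only [h]⟩, rfl⟩
  · rintro ⟨⟨⟨mu, T, T'⟩, ab⟩, hz⟩ ⟨⟨⟨mu', T₁, T₁'⟩, ab'⟩, hz'⟩ h
    simp only [Subtype.mk.injEq, Prod.mk.injEq] at h
    refine Subtype.ext (Prod.ext (Lower.ext ?_) h.2)
    exact bw_inj (hboxL mu T) (hboxL mu' T₁) h.1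
  · rintro ⟨⟨w, a, b⟩, hw⟩
    simp only [Finset.mem_filter, Finset.mem_product, mem_words] at hw
    obtain ⟨⟨hlen, -⟩, k₀, s₀, hst, hk, hs⟩ := hw
    have hst' := hst
    obtain ⟨p, p', hp, -⟩ := hst'
    have hc := count_of_run _ _ _ _ _ hp
    rw [hβ.count_bw] at hc
    obtain ⟨mu, hmu, rfl⟩ := bw_surj hlen (by simpa using hc.symm)
    obtain ⟨T', T, rfl, rfl⟩ := (stat_bw hmu hmu hβ hα).1 hst
    exact ⟨⟨⟨⟨mu, T, T'⟩, a, b⟩, by simp only [hk, hs]⟩, rfl⟩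

/-- The local rule of the growth diagram: two strips with a common upper end correspond to two strips
with a common lower end and two integers, the multiplicities of the two colors in one cell of the
growth diagram.  The equivalence is glued from the fibers over size and spin. -/
theorem local_rule (al be : YoungDiagram) :
    ∃ e : Upper al be ≃ Lower al be × (ℕ × ℕ), ∀ z,
      z.2.1.1.card = (e z).1.2.2.1.card + ((e z).2.1 + (e z).2.2) ∧
      z.2.2.1.card = (e z).1.2.1.1.card + ((e z).2.1 + (e z).2.2) ∧
      tilingSpin z.2.1.1 + tilingSpin z.2.2.1 =
        tilingSpin (e z).1.2.1.1 + tilingSpin (e z).1.2.2.1 + 2 * (e z).2.2 := by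
  let e := Equiv.ofFiberEquiv
    (f := fun z : Upper al be => (z.2.1.1.card, tilingSpin z.2.1.1 + tilingSpin z.2.2.1))
    (g := fun z : Lower al be × (ℕ × ℕ) => (z.1.2.2.1.card + (z.2.1 + z.2.2),
      tilingSpin z.1.2.2.1 + tilingSpin z.1.2.1.1 + 2 * z.2.2))
    (fun c => (fiber_equiv al be c.1 c.2).some)
  refine ⟨e, fun z => ?_⟩
  have h := Equiv.ofFiberEquiv_map (f := fun z : Upper al be =>
      (z.2.1.1.card, tilingSpin z.2.1.1 + tilingSpin z.2.2.1))
    (g := fun z : Lower al be × (ℕ × ℕ) => (z.1.2.2.1.card + (z.2.1 + z.2.2),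
      tilingSpin z.1.2.2.1 + tilingSpin z.1.2.1.1 + 2 * z.2.2))
    (fun c => (fiber_equiv al be c.1 c.2).some) z
  change (_, _) = (_, _) at h
  simp only [Prod.mk.injEq] at h
  obtain ⟨h1, h2⟩ := h
  -- the remaining size is determined by comparing the numbers of cells
  have c1 := z.2.1.card_eq
  have c2 := z.2.2.card_eq
  have c3 := (e z).1.2.1.card_eq
  have c4 := (e z).1.2.2.card_eq
  have h1' : (e z).1.2.2.1.card + ((e z).2.1 + (e z).2.2) = z.2.1.1.card := h1
  have h2' : tilingSpin (e z).1.2.2.1 + tilingSpin (e z).1.2.1.1 + 2 * (e z).2.2 =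
    tilingSpin z.2.1.1 + tilingSpin z.2.2.1 := h2
  omega

/-! ### Growth diagrams -/

/-- Semistandard domino tableaux with entries in `{1, …, N}`, built by adding the strip of the
largest entry to a tableau with smaller entries; the arguments are the outer and the inner shape. -/
def Tab : ℕ → YoungDiagram → YoungDiagram → Type
  | 0, la, de => PLift (la = de)
  | N + 1, la, de => Σ nu : YoungDiagram, Tab N nu de × HStrip nu la

/-- The weight of a tableau. -/
def Tab.wt : ∀ {N : ℕ} {la de : YoungDiagram}, Tab N la de → Fin N → ℕ
  | 0, _, _, _ => Fin.elim0
  | _ + 1, _, _, ⟨_, t, h⟩ => Fin.snoc (α := fun _ => ℕ) t.wt h.1.card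

/-- The spin of a tableau. -/
def Tab.sp : ∀ {N : ℕ} {la de : YoungDiagram}, Tab N la de → ℕ
  | 0, _, _, _ => 0
  | _ + 1, _, _, ⟨_, t, h⟩ => t.sp + tilingSpin h.1

/-- One row of the growth diagram: a strip is moved through a tableau with `N` letters. -/
theorem row_rule (N : ℕ) : ∀ al be : YoungDiagram,
    ∃ e : (Σ la, HStrip al la × Tab N la be) ≃
        (Σ ka, Tab N al ka × HStrip ka be) × (Fin N → ℕ × ℕ), ∀ z,
      (∀ j, z.2.2.wt j = (e z).1.2.1.wt j + (((e z).2 j).1 + ((e z).2 j).2)) ∧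
      z.2.1.1.card = (e z).1.2.2.1.card + ∑ j, (((e z).2 j).1 + ((e z).2 j).2) ∧
      tilingSpin z.2.1.1 + z.2.2.sp =
        (e z).1.2.1.sp + tilingSpin (e z).1.2.2.1 + 2 * ∑ j, ((e z).2 j).2 := by
  induction N with
  | zero =>
    intro al be
    refine ⟨⟨fun z => (⟨al, ⟨rfl⟩, z.2.2.down ▸ z.2.1⟩, Fin.elim0),
      fun y => ⟨be, y.1.2.1.down ▸ y.1.2.2, ⟨rfl⟩⟩, ?_, ?_⟩, ?_⟩
    · rintro ⟨la, h, ⟨rfl⟩⟩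
      rfl
    · rintro ⟨⟨ka, ⟨rfl⟩, h⟩, f⟩
      refine Prod.ext rfl (funext fun i => i.elim0)
    · rintro ⟨la, h, ⟨rfl⟩⟩
      refine ⟨fun i => i.elim0, by simp, by simp [Tab.sp]⟩
  | succ N ih =>
    intro al be
    choose e₁ h₁ using local_rule
    choose e₂ h₂ using ih
    let s₁ : (Σ la, HStrip al la × Tab (N + 1) la be) ≃ Σ nu, Tab N nu be × Upper al nu :=
      ⟨fun z => ⟨z.2.2.1, z.2.2.2.1, z.1, z.2.1, z.2.2.2.2⟩,
        fun z => ⟨z.2.2.1, z.2.2.2.1, z.1, z.2.1, z.2.2.2.2⟩, fun _ => rfl, fun _ => rfl⟩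
    let s₂ : (Σ nu, Tab N nu be × Upper al nu) ≃ Σ nu, Tab N nu be × (Lower al nu × (ℕ × ℕ)) :=
      Equiv.sigmaCongrRight fun nu => Equiv.prodCongr (Equiv.refl _) (e₁ al nu)
    let s₃ : (Σ nu, Tab N nu be × (Lower al nu × (ℕ × ℕ))) ≃
        (Σ mu, HStrip mu al × (Σ nu, HStrip mu nu × Tab N nu be)) × (ℕ × ℕ) :=
      ⟨fun z => (⟨z.2.2.1.1, z.2.2.1.2.1, z.1, z.2.2.1.2.2, z.2.1⟩, z.2.2.2),
        fun z => ⟨z.1.2.2.1, z.1.2.2.2.2, ⟨z.1.1, z.1.2.1, z.1.2.2.2.1⟩, z.2⟩,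
        fun _ => rfl, fun _ => rfl⟩
    let s₄ : (Σ mu, HStrip mu al × (Σ nu, HStrip mu nu × Tab N nu be)) × (ℕ × ℕ) ≃
        (Σ mu, HStrip mu al × ((Σ ka, Tab N mu ka × HStrip ka be) × (Fin N → ℕ × ℕ))) × (ℕ × ℕ) :=
      Equiv.prodCongr (Equiv.sigmaCongrRight fun mu =>
        Equiv.prodCongr (Equiv.refl _) (e₂ mu be)) (Equiv.refl _)
    let s₅ : (Σ mu, HStrip mu al × ((Σ ka, Tab N mu ka × HStrip ka be) × (Fin N → ℕ × ℕ))) ×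
        (ℕ × ℕ) ≃ (Σ ka, Tab (N + 1) al ka × HStrip ka be) × ((ℕ × ℕ) × (Fin N → ℕ × ℕ)) :=
      ⟨fun z => (⟨z.1.2.2.1.1, ⟨z.1.1, z.1.2.2.1.2.1, z.1.2.1⟩, z.1.2.2.1.2.2⟩, z.2, z.1.2.2.2),
        fun z => (⟨z.1.2.1.1, z.1.2.1.2.2, ⟨z.1.1, z.1.2.1.2.1, z.1.2.2⟩, z.2.2⟩, z.2.1),
        fun _ => rfl, fun _ => rfl⟩
    let s₆ : (Σ ka, Tab (N + 1) al ka × HStrip ka be) × ((ℕ × ℕ) × (Fin N → ℕ × ℕ)) ≃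
        (Σ ka, Tab (N + 1) al ka × HStrip ka be) × (Fin (N + 1) → ℕ × ℕ) :=
      Equiv.prodCongr (Equiv.refl _) (Fin.snocEquiv fun _ => ℕ × ℕ)
    refine ⟨s₁.trans <| s₂.trans <| s₃.trans <| s₄.trans <| s₅.trans s₆, ?_⟩
    rintro ⟨la, h, nu, t, g⟩
    obtain ⟨a1, a2, a3⟩ := h₁ al nu ⟨la, h, g⟩
    have hz : (s₁.trans <| s₂.trans <| s₃.trans <| s₄.trans <| s₅.trans s₆) ⟨la, h, nu, t, g⟩ =
      s₆ (s₅ (s₄ (s₃ ⟨nu, t, e₁ al nu ⟨la, h, g⟩⟩))) := rfl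
    rw [hz]
    generalize e₁ al nu ⟨la, h, g⟩ = y at a1 a2 a3 ⊢
    obtain ⟨⟨mu, g₁, g₂⟩, ab⟩ := y
    obtain ⟨b1, b2, b3⟩ := h₂ mu be ⟨nu, g₂, t⟩
    have hz' : s₆ (s₅ (s₄ (s₃ ⟨nu, t, ⟨mu, g₁, g₂⟩, ab⟩))) =
      s₆ (s₅ (⟨mu, g₁, e₂ mu be ⟨nu, g₂, t⟩⟩, ab)) := rfl
    rw [hz']
    generalize e₂ mu be ⟨nu, g₂, t⟩ = y at b1 b2 b3 ⊢
    obtain ⟨⟨ka, t', h'⟩, f⟩ := y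
    have hz'' : s₆ (s₅ (⟨mu, g₁, ⟨ka, t', h'⟩, f⟩, ab)) =
      (⟨ka, ⟨mu, t', g₁⟩, h'⟩, Fin.snoc (α := fun _ => ℕ × ℕ) f ab) := rfl
    rw [hz'']
    dsimp only at a1 a2 a3 b1 b2 b3 ⊢
    simp only [Fin.sum_univ_castSucc, Fin.snoc_castSucc, Fin.snoc_last, Tab.sp]
    refine ⟨fun j => ?_, by omega, by omega⟩
    refine Fin.lastCases ?_ (fun j => ?_) j
    · simp only [Tab.wt, Fin.snoc_last, a2]
    · simp only [Tab.wt, Fin.snoc_castSucc, b1]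

/-- The whole growth diagram, with `M` rows and `N` columns. -/
theorem grid_rule (N M : ℕ) : ∀ al be : YoungDiagram,
    ∃ e : (Σ la, Tab M la al × Tab N la be) ≃
        (Σ ka, Tab N al ka × Tab M be ka) × (Fin M → Fin N → ℕ × ℕ), ∀ z,
      (∀ i, z.2.1.wt i = (e z).1.2.2.wt i + ∑ j, (((e z).2 i j).1 + ((e z).2 i j).2)) ∧
      (∀ j, z.2.2.wt j = (e z).1.2.1.wt j + ∑ i, (((e z).2 i j).1 + ((e z).2 i j).2)) ∧
      z.2.1.sp + z.2.2.sp =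
        (e z).1.2.1.sp + (e z).1.2.2.sp + 2 * ∑ i, ∑ j, ((e z).2 i j).2 := by
  induction M with
  | zero =>
    intro al be
    refine ⟨⟨fun z => (⟨be, z.2.1.down ▸ z.2.2, ⟨rfl⟩⟩, Fin.elim0),
      fun y => ⟨al, ⟨rfl⟩, y.1.2.2.down ▸ y.1.2.1⟩, ?_, ?_⟩, ?_⟩
    · rintro ⟨la, ⟨rfl⟩, h⟩
      rfl
    · rintro ⟨⟨ka, h, ⟨rfl⟩⟩, f⟩
      refine Prod.ext rfl (funext fun i => i.elim0)
    · rintro ⟨la, ⟨rfl⟩, h⟩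
      refine ⟨fun i => i.elim0, fun j => by simp, by simp [Tab.sp]⟩
  | succ M ih =>
    intro al be
    choose e₁ h₁ using row_rule N
    choose e₂ h₂ using ih
    let s₁ : (Σ la, Tab (M + 1) la al × Tab N la be) ≃
        Σ nu, Tab M nu al × Σ la, HStrip nu la × Tab N la be :=
      ⟨fun z => ⟨z.2.1.1, z.2.1.2.1, z.1, z.2.1.2.2, z.2.2⟩,
        fun z => ⟨z.2.2.1, ⟨z.1, z.2.1, z.2.2.2.1⟩, z.2.2.2.2⟩, fun _ => rfl, fun _ => rfl⟩
    let s₂ : (Σ nu, Tab M nu al × Σ la, HStrip nu la × Tab N la be) ≃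
        Σ nu, Tab M nu al × ((Σ mu, Tab N nu mu × HStrip mu be) × (Fin N → ℕ × ℕ)) :=
      Equiv.sigmaCongrRight fun nu => Equiv.prodCongr (Equiv.refl _) (e₁ nu be)
    let s₃ : (Σ nu, Tab M nu al × ((Σ mu, Tab N nu mu × HStrip mu be) × (Fin N → ℕ × ℕ))) ≃
        (Σ mu, HStrip mu be × (Σ nu, Tab M nu al × Tab N nu mu)) × (Fin N → ℕ × ℕ) :=
      ⟨fun z => (⟨z.2.2.1.1, z.2.2.1.2.2, z.1, z.2.1, z.2.2.1.2.1⟩, z.2.2.2),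
        fun z => ⟨z.1.2.2.1, z.1.2.2.2.1, ⟨z.1.1, z.1.2.2.2.2, z.1.2.1⟩, z.2⟩,
        fun _ => rfl, fun _ => rfl⟩
    let s₄ : (Σ mu, HStrip mu be × (Σ nu, Tab M nu al × Tab N nu mu)) × (Fin N → ℕ × ℕ) ≃
        (Σ mu, HStrip mu be × ((Σ ka, Tab N al ka × Tab M mu ka) × (Fin M → Fin N → ℕ × ℕ))) ×
          (Fin N → ℕ × ℕ) :=
      Equiv.prodCongr (Equiv.sigmaCongrRight fun mu =>
        Equiv.prodCongr (Equiv.refl _) (e₂ al mu)) (Equiv.refl _)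
    let s₅ : (Σ mu, HStrip mu be × ((Σ ka, Tab N al ka × Tab M mu ka) ×
          (Fin M → Fin N → ℕ × ℕ))) × (Fin N → ℕ × ℕ) ≃
        (Σ ka, Tab N al ka × Tab (M + 1) be ka) ×
          ((Fin N → ℕ × ℕ) × (Fin M → Fin N → ℕ × ℕ)) :=
      ⟨fun z => (⟨z.1.2.2.1.1, z.1.2.2.1.2.1, ⟨z.1.1, z.1.2.2.1.2.2, z.1.2.1⟩⟩, z.2, z.1.2.2.2),
        fun z => (⟨z.1.2.2.1, z.1.2.2.2.2, ⟨z.1.1, z.1.2.1, z.1.2.2.2.1⟩, z.2.2⟩, z.2.1),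
        fun _ => rfl, fun _ => rfl⟩
    let s₆ : (Σ ka, Tab N al ka × Tab (M + 1) be ka) ×
          ((Fin N → ℕ × ℕ) × (Fin M → Fin N → ℕ × ℕ)) ≃
        (Σ ka, Tab N al ka × Tab (M + 1) be ka) × (Fin (M + 1) → Fin N → ℕ × ℕ) :=
      Equiv.prodCongr (Equiv.refl _) (Fin.snocEquiv fun _ => Fin N → ℕ × ℕ)
    refine ⟨s₁.trans <| s₂.trans <| s₃.trans <| s₄.trans <| s₅.trans s₆, ?_⟩
    rintro ⟨la, ⟨nu, t, h⟩, u⟩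
    obtain ⟨a1, a2, a3⟩ := h₁ nu be ⟨la, h, u⟩
    have hz : (s₁.trans <| s₂.trans <| s₃.trans <| s₄.trans <| s₅.trans s₆) ⟨la, ⟨nu, t, h⟩, u⟩ =
      s₆ (s₅ (s₄ (s₃ ⟨nu, t, e₁ nu be ⟨la, h, u⟩⟩))) := rfl
    rw [hz]
    generalize e₁ nu be ⟨la, h, u⟩ = y at a1 a2 a3 ⊢
    obtain ⟨⟨mu, u', h'⟩, ab⟩ := y
    obtain ⟨b1, b2, b3⟩ := h₂ al mu ⟨nu, t, u'⟩
    have hz' : s₆ (s₅ (s₄ (s₃ ⟨nu, t, ⟨mu, u', h'⟩, ab⟩))) =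
      s₆ (s₅ (⟨mu, h', e₂ al mu ⟨nu, t, u'⟩⟩, ab)) := rfl
    rw [hz']
    generalize e₂ al mu ⟨nu, t, u'⟩ = y at b1 b2 b3 ⊢
    obtain ⟨⟨ka, u'', t'⟩, f⟩ := y
    have hz'' : s₆ (s₅ (⟨mu, h', ⟨ka, u'', t'⟩, f⟩, ab)) =
      (⟨ka, u'', ⟨mu, t', h'⟩⟩, Fin.snoc (α := fun _ => Fin N → ℕ × ℕ) f ab) := rfl
    rw [hz'']
    dsimp only at a1 a2 a3 b1 b2 b3 ⊢
    simp only [Fin.sum_univ_castSucc, Fin.snoc_castSucc, Fin.snoc_last, Tab.sp]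
    refine ⟨fun i => ?_, fun j => ?_, by omega⟩
    · refine Fin.lastCases ?_ (fun i => ?_) i
      · simp only [Tab.wt, Fin.snoc_last, a2]
      · simp only [Tab.wt, Fin.snoc_castSucc, b1]
    · rw [a1, b2]
      omega

/-! ### Domino tableaux, cores and multisets of biletters -/

theorem RibbonTableau.ext_data {N : ℕ} {la de : YoungDiagram} {S T : RibbonTableau 2 N la de}
    (hc : S.chain = T.chain) (ht : S.tiling = T.tiling) : S = T := by
  cases S
  cases T
  cases hc
  cases ht
  rfl

theorem sigma_tableau_ext {N : ℕ} {la de nu nu' : YoungDiagram} {S : RibbonTableau 2 N nu de}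
    {S' : RibbonTableau 2 N nu' de} {h : HStrip nu la} {h' : HStrip nu' la} (hn : nu = nu')
    (hc : S.chain = S'.chain) (ht : S.tiling = S'.tiling) :
    (⟨nu, S, h⟩ : Σ nu, RibbonTableau 2 N nu de × HStrip nu la) = ⟨nu', S', h'⟩ := by
  subst hn
  rw [Subsingleton.elim h h', RibbonTableau.ext_data hc ht]

/-- Remove the strip of the largest entry. -/
def RibbonTableau.peel {N : ℕ} {la de : YoungDiagram} (T : RibbonTableau 2 (N + 1) la de) :
    Σ nu, RibbonTableau 2 N nu de × HStrip nu la :=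
  ⟨T.chain (Fin.last N).castSucc,
    { chain := fun i => T.chain i.castSucc
      chain_zero := T.chain_zero
      chain_last := rfl
      chain_mono := fun i => T.chain_mono i.castSucc
      tiling := fun i => T.tiling i.castSucc
      tiling_strip := fun i => T.tiling_strip i.castSucc },
    ⟨T.tiling (Fin.last N), by
      have h₁ := T.chain_mono (Fin.last N)
      have h₂ := T.tiling_strip (Fin.last N)
      rw [Fin.succ_last, T.chain_last] at h₁ h₂
      exact ⟨h₁, h₂⟩⟩⟩

/-- Add the strip of a new largest entry. -/
def RibbonTableau.extend {N : ℕ} {la de nu : YoungDiagram} (T : RibbonTableau 2 N nu de)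
    (h : HStrip nu la) : RibbonTableau 2 (N + 1) la de where
  chain := Fin.snoc (α := fun _ => YoungDiagram) T.chain la
  chain_zero := by
    rw [← Fin.castSucc_zero, Fin.snoc_castSucc, T.chain_zero]
  chain_last := Fin.snoc_last _ _
  chain_mono := fun i => by
    refine Fin.lastCases ?_ (fun i => ?_) i
    · rw [Fin.succ_last, Fin.snoc_last, Fin.snoc_castSucc, T.chain_last]
      exact h.2.1
    · rw [Fin.succ_castSucc, Fin.snoc_castSucc, Fin.snoc_castSucc]
      exact T.chain_mono i
  tiling := Fin.snoc (α := fun _ => Finset (Finset Cell)) T.tiling h.1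
  tiling_strip := fun i => by
    refine Fin.lastCases ?_ (fun i => ?_) i
    · rw [Fin.succ_last, Fin.snoc_last, Fin.snoc_castSucc, T.chain_last, Fin.snoc_last]
      exact h.2.2
    · rw [Fin.succ_castSucc, Fin.snoc_castSucc, Fin.snoc_castSucc, Fin.snoc_castSucc]
      exact T.tiling_strip i

/-- A tableau with `N + 1` letters is a tableau with `N` letters and one more strip. -/
def RibbonTableau.peelEquiv (N : ℕ) (la de : YoungDiagram) :
    RibbonTableau 2 (N + 1) la de ≃ Σ nu, RibbonTableau 2 N nu de × HStrip nu la where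
  toFun := RibbonTableau.peel
  invFun := fun z => z.2.1.extend z.2.2
  left_inv := fun T => by
    refine RibbonTableau.ext_data (funext fun i => ?_) (funext fun i => ?_)
    · refine Fin.lastCases ?_ (fun i => ?_) i
      · simp [extend, T.chain_last]
      · simp [extend, peel]
    · refine Fin.lastCases ?_ (fun i => ?_) i
      · simp [extend, peel]
      · simp [extend, peel]
  right_inv := by
    rintro ⟨nu, T, h⟩
    refine sigma_tableau_ext ?_ (funext fun i => ?_) (funext fun i => ?_)
    · simp [extend, T.chain_last]
    · simp [extend]
    · simp [extend]

/-- Domino tableaux and their recursive description `Tab` agree, with weight and spin. -/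
theorem exists_tab_equiv (N : ℕ) : ∀ la de : YoungDiagram,
    ∃ e : RibbonTableau 2 N la de ≃ Tab N la de,
      ∀ T, (∀ j, (T.tiling j).card = (e T).wt j) ∧ T.spin = (e T).sp := by
  induction N with
  | zero =>
    intro la de
    refine ⟨⟨fun T => ⟨T.chain_last.symm.trans T.chain_zero⟩, fun t =>
      { chain := fun _ => la
        chain_zero := t.down
        chain_last := rfl
        chain_mono := fun i => i.elim0
        tiling := fun i => i.elim0
        tiling_strip := fun i => i.elim0 }, fun T => ?_, fun t => ?_⟩, fun T => ?_⟩
    · refine RibbonTableau.ext_data (funext fun i => ?_) (funext fun i => i.elim0)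
      rw [show i = Fin.last 0 from Fin.ext (by simp), T.chain_last]
    · rfl
    · exact ⟨fun j => j.elim0, by simp [RibbonTableau.spin, Tab.sp]⟩
  | succ N ih =>
    intro la de
    choose e he using ih
    refine ⟨(RibbonTableau.peelEquiv N la de).trans (Equiv.sigmaCongrRight fun nu =>
      Equiv.prodCongr (e nu de) (Equiv.refl _)), fun T => ⟨fun j => ?_, ?_⟩⟩
    · have h := (he _ de T.peel.2.1).1
      refine Fin.lastCases ?_ (fun j => ?_) j
      · exact (Fin.snoc_last (α := fun _ => ℕ) _ _).symm
      · refine Eq.trans (h j) (Fin.snoc_castSucc (α := fun _ => ℕ) _ _ _).symm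
    · have h := (he _ de T.peel.2.1).2
      rw [RibbonTableau.spin, Fin.sum_univ_castSucc]
      exact congrArg (· + tilingSpin (T.tiling (Fin.last N))) h

theorem Tab.card_eq : ∀ {N : ℕ} {la de : YoungDiagram} (t : Tab N la de),
    la.card = de.card + 2 * ∑ j, t.wt j
  | 0, _, _, ⟨h⟩ => by simp [h]
  | N + 1, la, de, ⟨nu, t, h⟩ => by
    rw [h.card_eq, t.card_eq, Fin.sum_univ_castSucc]
    simp only [Tab.wt, Fin.snoc_castSucc, Fin.snoc_last]
    ring

theorem Tab.reflTransGen : ∀ {N : ℕ} {la de : YoungDiagram}, Tab N la de →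
    Relation.ReflTransGen (RibbonStep 2) la de
  | 0, _, _, ⟨h⟩ => by rw [h]
  | _ + 1, _, _, ⟨_, t, h⟩ => (HStrip.reflTransGen _ h rfl).trans t.reflTransGen

/-- The tableau of empty shape, all of whose strips are empty. -/
def Tab.trivial (de : YoungDiagram) : ∀ N : ℕ, Tab N de de
  | 0 => ⟨rfl⟩
  | N + 1 => ⟨de, Tab.trivial de N, HStrip.refl de⟩

/-- Nothing can be removed from a core, so the only tableau whose outer shape is a core is the
trivial one. -/
theorem Tab.eq_trivial {de : YoungDiagram} (hde : ∀ nu, ¬ RibbonStep 2 de nu) :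
    ∀ {N : ℕ} {ka : YoungDiagram} (t : Tab N de ka),
      (⟨ka, t⟩ : Σ ka, Tab N de ka) = ⟨de, Tab.trivial de N⟩
  | 0, _, ⟨rfl⟩ => rfl
  | N + 1, ka, ⟨nu, t, h⟩ => by
    have hn : de = nu := h.eq_of_empty (HStrip.empty_of_core hde h)
    subst hn
    have ht := Tab.eq_trivial hde t
    obtain ⟨h₁, h₂⟩ := Sigma.mk.inj_iff.mp ht
    subst h₁
    rw [eq_of_heq h₂, Subsingleton.elim h (HStrip.refl _)]
    rfl

theorem Tab.wt_trivial (de : YoungDiagram) : ∀ (N : ℕ) (j : Fin N), (Tab.trivial de N).wt j = 0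
  | 0, j => j.elim0
  | N + 1, j => by
    refine Fin.lastCases ?_ (fun j => ?_) j
    · simp [Tab.trivial, Tab.wt, HStrip.refl]
    · simp [Tab.trivial, Tab.wt, Tab.wt_trivial de N j]

theorem Tab.sp_trivial (de : YoungDiagram) : ∀ N : ℕ, (Tab.trivial de N).sp = 0
  | 0 => rfl
  | N + 1 => by simp [Tab.trivial, Tab.sp, Tab.sp_trivial de N, HStrip.refl, tilingSpin]

theorem pair_eq_trivial {de : YoungDiagram} (hde : ∀ nu, ¬ RibbonStep 2 de nu) {N M : ℕ}
    (z : Σ ka, Tab N de ka × Tab M de ka) :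
    z = ⟨de, Tab.trivial de N, Tab.trivial de M⟩ := by
  obtain ⟨ka, s, t⟩ := z
  obtain ⟨h₁, h₂⟩ := Sigma.mk.inj_iff.mp (Tab.eq_trivial hde s)
  subst h₁
  obtain ⟨-, h₃⟩ := Sigma.mk.inj_iff.mp (Tab.eq_trivial hde t)
  rw [eq_of_heq h₂, eq_of_heq h₃]

/-- A multiset of colored biletters as a matrix of pairs: the `(i, j)` entry holds the
multiplicities of `(0, i, j)` and `(1, i, j)`. -/
noncomputable def multisetEquiv (M N : ℕ) : Multiset (Fin 2 × Fin M × Fin N) ≃ (Fin M → Fin N → ℕ × ℕ) :=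
  (Multiset.toFinsupp.toEquiv.trans Finsupp.equivFunOnFinite).trans
    ⟨fun f i j => (f (0, i, j), f (1, i, j)),
      fun g t => if t.1 = 0 then (g t.2.1 t.2.2).1 else (g t.2.1 t.2.2).2,
      fun f => by
        funext ⟨c, i, j⟩
        fin_cases c <;> simp,
      fun g => by
        funext i j
        simp⟩

theorem multisetEquiv_apply {M N : ℕ} (w : Multiset (Fin 2 × Fin M × Fin N)) (i : Fin M)
    (j : Fin N) : multisetEquiv M N w i j = (w.count (0, i, j), w.count (1, i, j)) := by
  simp [multisetEquiv]

/-- Additive statistics of a multiset are sums over the entries of its matrix. -/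
theorem sum_map_eq {M N : ℕ} (w : Multiset (Fin 2 × Fin M × Fin N))
    (g : Fin 2 × Fin M × Fin N → ℕ) :
    (w.map g).sum = ∑ i, ∑ j, ((multisetEquiv M N w i j).1 * g (0, i, j) +
      (multisetEquiv M N w i j).2 * g (1, i, j)) := by
  rw [Finset.sum_multiset_map_count, Finset.sum_subset (Finset.subset_univ _)
    (fun t _ ht => by simp [Multiset.count_eq_zero.mpr (by simpa using ht)])]
  rw [Fintype.sum_prod_type, Fin.sum_univ_two, Fintype.sum_prod_type, Fintype.sum_prod_type,
    ← Finset.sum_add_distrib]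
  simp only [← Finset.sum_add_distrib, multisetEquiv_apply, smul_eq_mul]

theorem countP_eq_sum {α : Type*} (p : α → Prop) [DecidablePred p] (w : Multiset α) :
    w.countP p = (w.map fun t => if p t then 1 else 0).sum := by
  induction w using Multiset.induction_on with
  | empty => simp
  | cons a w ih =>
    rw [Multiset.countP_cons, ih, Multiset.map_cons, Multiset.sum_cons, add_comm]

theorem multiset_stats {M N : ℕ} (w : Multiset (Fin 2 × Fin M × Fin N)) :
    Multiset.card w = ∑ j, ∑ i, ((multisetEquiv M N w i j).1 + (multisetEquiv M N w i j).2) ∧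
    (w.map fun t => (t.1 : ℕ)).sum = ∑ i, ∑ j, (multisetEquiv M N w i j).2 ∧
    (∀ j, w.countP (fun t => t.2.2 = j) =
      ∑ i, ((multisetEquiv M N w i j).1 + (multisetEquiv M N w i j).2)) ∧
    ∀ i, w.countP (fun t => t.2.1 = i) =
      ∑ j, ((multisetEquiv M N w i j).1 + (multisetEquiv M N w i j).2) := by
  refine ⟨?_, ?_, fun j => ?_, fun i => ?_⟩
  · have h := sum_map_eq w (fun _ => 1)
    rw [Finset.sum_comm]
    simpa using h
  · rw [sum_map_eq]
    simp
  · rw [countP_eq_sum, sum_map_eq]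
    refine Finset.sum_congr rfl fun i _ => ?_
    simp [Finset.sum_add_distrib]
  · rw [countP_eq_sum, sum_map_eq, Finset.sum_comm]
    refine Finset.sum_congr rfl fun j _ => ?_
    simp [Finset.sum_add_distrib]

/-- semistandard domino insertion.  For `n = 2` and a fixed 2-core `δ`
there is a color-to-spin, weight-preserving bijection between multisets of `m` colored
biletters `(c, i, j)` (with `c ∈ {0,1}`, `i ∈ {1,…,M}`, `j ∈ {1,…,N}`) and pairs `(P, Q)`
of semistandard domino tableaux of the same shape `λ` (with 2-core `δ` and
`|λ| = 2m + |δ|`), with `P` having entries in `{1,…,N}` and `Q` in `{1,…,M}`. -/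
theorem domino_insertion_bijection (delta : YoungDiagram)
    (hdelta : IsNCoreOf 2 delta delta) (m M N : ℕ) (hm : 1 ≤ m) (hM : 1 ≤ M) (hN : 1 ≤ N) :
    ∃ F : {w : Multiset (Fin 2 × Fin M × Fin N) // Multiset.card w = m} ≃
        {PQ : Σ lam : YoungDiagram,
            RibbonTableau 2 N lam delta × RibbonTableau 2 M lam delta //
          IsNCoreOf 2 delta PQ.1 ∧ PQ.1.card = 2 * m + delta.card},
      ∀ w : {w : Multiset (Fin 2 × Fin M × Fin N) // Multiset.card w = m},
        (2 * (w.1.map (fun t => (t.1 : ℕ))).sum =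
            (F w).1.2.1.spin + (F w).1.2.2.spin) ∧
        (∀ j : Fin N,
          (((F w).1.2.1).tiling j).card = w.1.countP (fun t => t.2.2 = j)) ∧
        (∀ i : Fin M,
          (((F w).1.2.2).tiling i).card = w.1.countP (fun t => t.2.1 = i)) := by
  obtain ⟨e, he⟩ := grid_rule N M delta delta
  choose a ha using exists_tab_equiv
  -- The lower boundary of the growth diagram consists of tableaux with outer shape the core
  -- `delta`, which are trivial, so it carries no information.
  let u : (Fin M → Fin N → ℕ × ℕ) ≃
      (Σ ka, Tab N delta ka × Tab M delta ka) × (Fin M → Fin N → ℕ × ℕ) :=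
    ⟨fun f => (⟨delta, Tab.trivial delta N, Tab.trivial delta M⟩, f), Prod.snd, fun _ => rfl,
      fun z => Prod.ext (pair_eq_trivial hdelta.2 z.1).symm rfl⟩
  let v : (Σ la, Tab M la delta × Tab N la delta) ≃
      Σ la, RibbonTableau 2 N la delta × RibbonTableau 2 M la delta :=
    Equiv.sigmaCongrRight fun la =>
      (Equiv.prodComm _ _).trans (Equiv.prodCongr (a N la delta).symm (a M la delta).symm)
  let G₀ := (((multisetEquiv M N).trans u).trans e.symm).trans v
  have key : ∀ w : Multiset (Fin 2 × Fin M × Fin N),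
      (2 * (w.map (fun t => (t.1 : ℕ))).sum = (G₀ w).2.1.spin + (G₀ w).2.2.spin) ∧
      (∀ j, (((G₀ w).2.1).tiling j).card = w.countP (fun t => t.2.2 = j)) ∧
      (∀ i, (((G₀ w).2.2).tiling i).card = w.countP (fun t => t.2.1 = i)) ∧
      IsNCoreOf 2 delta (G₀ w).1 ∧ (G₀ w).1.card = 2 * Multiset.card w + delta.card := by
    intro w
    obtain ⟨s₁, s₂, s₃, s₄⟩ := multiset_stats w
    have h := he (e.symm (u (multisetEquiv M N w)))
    rw [e.apply_symm_apply] at h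
    obtain ⟨h₁, h₂, h₃⟩ := h
    generalize hz : e.symm (u (multisetEquiv M N w)) = z at h₁ h₂ h₃
    have hG : G₀ w = ⟨z.1, (a N z.1 delta).symm z.2.2, (a M z.1 delta).symm z.2.1⟩ := by
      rw [← hz]
      rfl
    have hP := ha N z.1 delta ((a N z.1 delta).symm z.2.2)
    have hQ := ha M z.1 delta ((a M z.1 delta).symm z.2.1)
    rw [Equiv.apply_symm_apply] at hP hQ
    simp only [u, Equiv.coe_fn_mk, Tab.wt_trivial, Tab.sp_trivial, zero_add] at h₁ h₂ h₃
    rw [hG]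
    refine ⟨?_, fun j => ?_, fun i => ?_, ⟨z.2.1.reflTransGen, hdelta.2⟩, ?_⟩
    · rw [hP.2, hQ.2, s₂, ← h₃, add_comm]
    · rw [hP.1, s₃, h₂]
    · rw [hQ.1, s₄, h₁]
    · rw [z.2.2.card_eq, s₁, add_comm]
      simp only [h₂]
  refine ⟨G₀.subtypeEquiv fun w => ?_, fun w => ?_⟩
  · obtain ⟨-, -, -, h₁, h₂⟩ := key w
    exact ⟨fun h => ⟨h₁, by rw [h₂, h]⟩, fun h => by have := h.2; omega⟩
  · obtain ⟨h₁, h₂, h₃, -⟩ := key w.1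
    exact ⟨h₁, h₂, h₃⟩
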